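/- Let (η, α, U, A, φ, σ) be a solution of the Gowdy symmetric IIA system on (T₋,T₊) with 0 < T₋ < t_i < T₊ < ∞. Assume there is a constant λ̄ with |λ| ≤ λ̄ < 1/2 and that the timelike convergence condition φ̇² + e^{2λφ}σ̇² ≥ (1/2)αQ²e^{2(η+λφ−U)} holds at every point. Then the functions α', α̇' and α̈ are bounded on (T₋,t_i] × S¹, and so are η, η̇ and η'. -/

import Mathlib

/-!
Towards the past everything follows from an upper bound on the potential
`V = α Q² e^{2λφ+2(η-U)}`. With `α = e^{2β}` it reads `V = Q² e^w`, `w = 2β + 2λφ + 2η - 2U`, and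
the equation for `α` becomes `β̇ = -tV/2`.

*Bound on `w`.* The wave equations make the energy `E = ∫ e^{-β} (𝓔 + V/4)` nonincreasing and
`t² E` nondecreasing in time (`BetaSys.energy_bounds`), so on `(Tm, t_i]` the energy lies between
positive constants. The constraints bound `|w'|` by `e^{-β}(1 + 𝓔)`, hence the oscillation of `w`
over a circle is bounded (`BetaSys.osc_w`). The timelike convergence condition gives a lower bound
on the time derivative of `w - (3/4)β`, hence `e^{-β} e^{4w/3}` is bounded
(`BetaSys.w_sub_beta_le`). The mean `m` of `w` with weight `e^{-β}` satisfies `ṁ ≥ -C`: the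
potential enters with the bad sign through `∫ e^{-β} V`, which by the interpolation
`e^w ≤ e^{4w/3}/k + k³` is at most a small constant, absorbed by `Tm E(t_i)`, plus a multiple of
`∫ e^{-β}`. So `m`, and with it `w`, is bounded above (`BetaSys.w_le`).

*Derivatives.* Once `V` is bounded, so is `β`. The null energy densities of `(U, A, φ, σ)` satisfy
transport equations along the two families of characteristics, with sources linear in the
densities (`BetaSys.transport_bound`), and a maximum principle bounds them
(`bdPast_of_transport`). The constraints then bound `η̇` and `γ' = η' + β'`, hence `η`, `ẇ` and `w'`;
finally `∂ₜ β' = -tVw'/2` bounds `β'`, and `η'`, `α'`, `α̇'`, `α̈` are expressed through the bounded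
quantities.
-/

noncomputable section

open Real Set MeasureTheory Filter

/-- Partial derivative in the first (time) variable. -/
def pt (f : ℝ → ℝ → ℝ) : ℝ → ℝ → ℝ := fun t θ => deriv (fun s => f s θ) t

/-- Partial derivative in the second (angle) variable. -/
def pth (f : ℝ → ℝ → ℝ) : ℝ → ℝ → ℝ := fun t θ => deriv (fun x => f t x) θ

/-- The full Gowdy symmetric IIA system (both constraints, the equation for `α`,
and the four evolution equations) holding at all times in `S` (dot = `pt`,
prime = `pth`). -/
structure IsGowdyIIA (Q lam : ℝ) (S : Set ℝ) (η α U A φ σ : ℝ → ℝ → ℝ) : Prop where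
  alpha_pos : ∀ t ∈ S, ∀ θ : ℝ, 0 < α t θ
  constraint_t : ∀ t ∈ S, ∀ θ : ℝ,
    pt η t θ / t =
      (pt U t θ) ^ 2 + α t θ * (pth U t θ) ^ 2
      + exp (4 * U t θ) / (4 * t ^ 2) * ((pt A t θ) ^ 2 + α t θ * (pth A t θ) ^ 2)
      + (1 / 4) * ((pt φ t θ) ^ 2 + α t θ * (pth φ t θ) ^ 2
          + exp (2 * lam * φ t θ) * ((pt σ t θ) ^ 2 + α t θ * (pth σ t θ) ^ 2)
          + α t θ * Q ^ 2 * exp (2 * lam * φ t θ + 2 * (η t θ - U t θ)))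
  constraint_θ : ∀ t ∈ S, ∀ θ : ℝ,
    pth η t θ / t =
      2 * pt U t θ * pth U t θ
      + exp (4 * U t θ) / (2 * t ^ 2) * (pt A t θ * pth A t θ)
      - pth α t θ / (2 * t * α t θ)
      + (1 / 2) * (pt φ t θ * pth φ t θ
          + exp (2 * lam * φ t θ) * (pt σ t θ * pth σ t θ))
  constraint_α : ∀ t ∈ S, ∀ θ : ℝ,
    pt α t θ = - t * (α t θ) ^ 2 * Q ^ 2 * exp (2 * lam * φ t θ + 2 * (η t θ - U t θ))
  evol_U : ∀ t ∈ S, ∀ θ : ℝ,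
    pt (pt U) t θ - α t θ * pth (pth U) t θ =
      - pt U t θ / t + pt α t θ * pt U t θ / (2 * α t θ) + pth α t θ * pth U t θ / 2
      + exp (4 * U t θ) / (2 * t ^ 2) * ((pt A t θ) ^ 2 - α t θ * (pth A t θ) ^ 2)
      + (1 / 4) * α t θ * Q ^ 2 * exp (2 * lam * φ t θ + 2 * (η t θ - U t θ))
  evol_A : ∀ t ∈ S, ∀ θ : ℝ,
    pt (pt A) t θ - α t θ * pth (pth A) t θ =
      pt A t θ / t + pt α t θ * pt A t θ / (2 * α t θ) + pth α t θ * pth A t θ / 2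
      - 4 * (pt A t θ * pt U t θ - α t θ * pth A t θ * pth U t θ)
  evol_φ : ∀ t ∈ S, ∀ θ : ℝ,
    pt (pt φ) t θ - α t θ * pth (pth φ) t θ =
      - pt φ t θ / t + pt α t θ * pt φ t θ / (2 * α t θ) + pth α t θ * pth φ t θ / 2
      + lam * exp (2 * lam * φ t θ) * ((pt σ t θ) ^ 2 - α t θ * (pth σ t θ) ^ 2)
      - lam * α t θ * Q ^ 2 * exp (2 * lam * φ t θ + 2 * (η t θ - U t θ))
  evol_σ : ∀ t ∈ S, ∀ θ : ℝ,
    pt (pt σ) t θ - α t θ * pth (pth σ) t θ =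
      - pt σ t θ / t + pt α t θ * pt σ t θ / (2 * α t θ) + pth α t θ * pth σ t θ / 2
      - 2 * lam * (pt φ t θ * pt σ t θ - α t θ * pth φ t θ * pth σ t θ)

/-- A smooth, spatially `2π`-periodic solution of the Gowdy symmetric IIA system
on the areal time interval `(Tm, Tp)`. -/
structure GowdySolution (Q lam Tm Tp : ℝ) where
  η : ℝ → ℝ → ℝ
  α : ℝ → ℝ → ℝ
  U : ℝ → ℝ → ℝ
  A : ℝ → ℝ → ℝ
  φ : ℝ → ℝ → ℝ
  σ : ℝ → ℝ → ℝ
  smooth : ∀ f ∈ ([η, α, U, A, φ, σ] : List (ℝ → ℝ → ℝ)),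
    ContDiffOn ℝ (⊤ : ℕ∞) (fun p : ℝ × ℝ => f p.1 p.2) (Ioo Tm Tp ×ˢ (univ : Set ℝ))
  periodic : ∀ f ∈ ([η, α, U, A, φ, σ] : List (ℝ → ℝ → ℝ)), ∀ t θ : ℝ,
    f t (θ + 2 * π) = f t θ
  sys : IsGowdyIIA Q lam (Ioo Tm Tp) η α U A φ σ

/-- The energy density `𝓔`. -/
def calE (lam : ℝ) (α U A φ σ : ℝ → ℝ → ℝ) (t θ : ℝ) : ℝ :=
  (pt U t θ) ^ 2 + α t θ * (pth U t θ) ^ 2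
  + exp (4 * U t θ) / (4 * t ^ 2) * ((pt A t θ) ^ 2 + α t θ * (pth A t θ) ^ 2)
  + (1 / 4) * ((pt φ t θ) ^ 2 + α t θ * (pth φ t θ) ^ 2
      + exp (2 * lam * φ t θ) * ((pt σ t θ) ^ 2 + α t θ * (pth σ t θ) ^ 2))

/-- The energy `E(t)` (integral over the circle `S¹ = [0, 2π]`). -/
def energyE (Q lam : ℝ) (η α U A φ σ : ℝ → ℝ → ℝ) (t : ℝ) : ℝ :=
  ∫ θ in Ioc (0 : ℝ) (2 * π),
    (1 / Real.sqrt (α t θ)) *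
      (calE lam α U A φ σ t θ
        + (1 / 4) * α t θ * Q ^ 2 * exp (2 * (η t θ + lam * φ t θ - U t θ)))

/-- The energy `Ẽ(t)`. -/
def energyEt (lam : ℝ) (α U A φ σ : ℝ → ℝ → ℝ) (t : ℝ) : ℝ :=
  ∫ θ in Ioc (0 : ℝ) (2 * π), calE lam α U A φ σ t θ / Real.sqrt (α t θ)

/-- The timelike convergence condition (TCC) for the Gowdy symmetric IIA system. -/
def TCC (Q lam Tm Tp : ℝ) (η α U φ σ : ℝ → ℝ → ℝ) : Prop :=
  ∀ t ∈ Ioo Tm Tp, ∀ θ : ℝ,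
    (pt φ t θ) ^ 2 + exp (2 * lam * φ t θ) * (pt σ t θ) ^ 2
      ≥ (1 / 2) * α t θ * Q ^ 2 * exp (2 * (η t θ + lam * φ t θ - U t θ))

/-! ### Smooth functions on the slab `(Tm, Tp) × ℝ` -/

/-- `f` is smooth on the slab `(a, b) × ℝ`. -/
def SmoothSlab (a b : ℝ) (f : ℝ → ℝ → ℝ) : Prop :=
  ContDiffOn ℝ (⊤ : ℕ∞) (fun p : ℝ × ℝ => f p.1 p.2) (Ioo a b ×ˢ (univ : Set ℝ))

namespace SmoothSlab

variable {a b : ℝ} {f g : ℝ → ℝ → ℝ}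

lemma isOpen_slab (a b : ℝ) : IsOpen (Ioo a b ×ˢ (univ : Set ℝ)) := isOpen_Ioo.prod isOpen_univ

lemma contDiffAt (hf : SmoothSlab a b f) {t : ℝ} (ht : t ∈ Ioo a b) (θ : ℝ) :
    ContDiffAt ℝ (⊤ : ℕ∞) (fun p : ℝ × ℝ => f p.1 p.2) (t, θ) :=
  ContDiffOn.contDiffAt hf ((isOpen_slab a b).mem_nhds ⟨ht, mem_univ _⟩)

lemma hasFDerivAt (hf : SmoothSlab a b f) {t : ℝ} (ht : t ∈ Ioo a b) (θ : ℝ) :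
    HasFDerivAt (fun p : ℝ × ℝ => f p.1 p.2)
      (fderiv ℝ (fun p : ℝ × ℝ => f p.1 p.2) (t, θ)) (t, θ) :=
  ((hf.contDiffAt ht θ).differentiableAt (by simp)).hasFDerivAt

lemma hasDerivAt_t_aux (hf : SmoothSlab a b f) {t : ℝ} (ht : t ∈ Ioo a b) (θ : ℝ) :
    HasDerivAt (fun s => f s θ) (fderiv ℝ (fun p : ℝ × ℝ => f p.1 p.2) (t, θ) (1, 0)) t :=
  HasFDerivAt.comp_hasDerivAt (f := fun s : ℝ => (s, θ)) t (hf.hasFDerivAt ht θ)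
    ((hasDerivAt_id t).prodMk (hasDerivAt_const t θ))

lemma hasDerivAt_θ_aux (hf : SmoothSlab a b f) {t : ℝ} (ht : t ∈ Ioo a b) (θ : ℝ) :
    HasDerivAt (fun x => f t x) (fderiv ℝ (fun p : ℝ × ℝ => f p.1 p.2) (t, θ) (0, 1)) θ :=
  (hf.hasFDerivAt ht θ).comp_hasDerivAt θ ((hasDerivAt_const θ t).prodMk (hasDerivAt_id θ))

lemma hasDerivAt_t (hf : SmoothSlab a b f) {t : ℝ} (ht : t ∈ Ioo a b) (θ : ℝ) :
    HasDerivAt (fun s => f s θ) (pt f t θ) t :=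
  (hf.hasDerivAt_t_aux ht θ).differentiableAt.hasDerivAt

lemma hasDerivAt_θ (hf : SmoothSlab a b f) {t : ℝ} (ht : t ∈ Ioo a b) (θ : ℝ) :
    HasDerivAt (fun x => f t x) (pth f t θ) θ :=
  (hf.hasDerivAt_θ_aux ht θ).differentiableAt.hasDerivAt

lemma pt_eq (hf : SmoothSlab a b f) {t : ℝ} (ht : t ∈ Ioo a b) (θ : ℝ) :
    pt f t θ = fderiv ℝ (fun p : ℝ × ℝ => f p.1 p.2) (t, θ) (1, 0) :=
  (hf.hasDerivAt_t_aux ht θ).deriv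

lemma pth_eq (hf : SmoothSlab a b f) {t : ℝ} (ht : t ∈ Ioo a b) (θ : ℝ) :
    pth f t θ = fderiv ℝ (fun p : ℝ × ℝ => f p.1 p.2) (t, θ) (0, 1) :=
  (hf.hasDerivAt_θ_aux ht θ).deriv

lemma fderiv_smooth (hf : SmoothSlab a b f) :
    ContDiffOn ℝ (⊤ : ℕ∞) (fderiv ℝ (fun p : ℝ × ℝ => f p.1 p.2)) (Ioo a b ×ˢ (univ : Set ℝ)) :=
  ContDiffOn.fderiv_of_isOpen hf (isOpen_slab a b) (by simp)

lemma smooth_pt (hf : SmoothSlab a b f) : SmoothSlab a b (pt f) :=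
  (hf.fderiv_smooth.clm_apply (contDiffOn_const (c := ((1 : ℝ), (0 : ℝ))))).congr
    fun p hp => hf.pt_eq hp.1 p.2

lemma smooth_pth (hf : SmoothSlab a b f) : SmoothSlab a b (pth f) :=
  (hf.fderiv_smooth.clm_apply (contDiffOn_const (c := ((0 : ℝ), (1 : ℝ))))).congr
    fun p hp => hf.pth_eq hp.1 p.2

lemma fderiv_fderiv_apply (hf : SmoothSlab a b f) {t : ℝ} (ht : t ∈ Ioo a b) (θ : ℝ) (v w : ℝ × ℝ) :
    fderiv ℝ (fun p : ℝ × ℝ => fderiv ℝ (fun p : ℝ × ℝ => f p.1 p.2) p v) (t, θ) w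
      = fderiv ℝ (fderiv ℝ (fun p : ℝ × ℝ => f p.1 p.2)) (t, θ) w v := by
  have h : DifferentiableAt ℝ (fderiv ℝ (fun p : ℝ × ℝ => f p.1 p.2)) (t, θ) :=
    (hf.fderiv_smooth.contDiffAt ((isOpen_slab a b).mem_nhds ⟨ht, mem_univ _⟩)).differentiableAt
      (by simp)
  rw [fderiv_clm_apply h (differentiableAt_const v)]
  simp

/-- Mixed partial derivatives commute. -/
lemma pt_pth (hf : SmoothSlab a b f) {t : ℝ} (ht : t ∈ Ioo a b) (θ : ℝ) :
    pt (pth f) t θ = pth (pt f) t θ := by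
  have hmem : Ioo a b ×ˢ (univ : Set ℝ) ∈ nhds (t, θ) :=
    (isOpen_slab a b).mem_nhds ⟨ht, mem_univ _⟩
  rw [hf.smooth_pth.pt_eq ht, hf.smooth_pt.pth_eq ht]
  have e1 : (fun p : ℝ × ℝ => pth f p.1 p.2) =ᶠ[nhds (t, θ)]
      fun p => fderiv ℝ (fun p : ℝ × ℝ => f p.1 p.2) p (0, 1) :=
    Filter.mem_of_superset hmem fun p hp => hf.pth_eq hp.1 p.2
  have e2 : (fun p : ℝ × ℝ => pt f p.1 p.2) =ᶠ[nhds (t, θ)]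
      fun p => fderiv ℝ (fun p : ℝ × ℝ => f p.1 p.2) p (1, 0) :=
    Filter.mem_of_superset hmem fun p hp => hf.pt_eq hp.1 p.2
  rw [e1.fderiv_eq, e2.fderiv_eq, hf.fderiv_fderiv_apply ht, hf.fderiv_fderiv_apply ht]
  exact (hf.contDiffAt ht θ).isSymmSndFDerivAt
    (by simpa using WithTop.coe_le_coe.2 (le_top : (2 : ℕ∞) ≤ ⊤)) _ _

lemma continuousOn (hf : SmoothSlab a b f) :
    ContinuousOn (fun p : ℝ × ℝ => f p.1 p.2) (Ioo a b ×ˢ (univ : Set ℝ)) :=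
  ContDiffOn.continuousOn hf

lemma continuous_θ (hf : SmoothSlab a b f) {t : ℝ} (ht : t ∈ Ioo a b) :
    Continuous (fun θ => f t θ) :=
  continuous_iff_continuousAt.2 fun θ => (hf.hasDerivAt_θ ht θ).continuousAt

lemma intervalIntegrable (hf : SmoothSlab a b f) {t : ℝ} (ht : t ∈ Ioo a b) (x y : ℝ) :
    IntervalIntegrable (fun θ => f t θ) volume x y :=
  (hf.continuous_θ ht).intervalIntegrable x y

lemma const (c : ℝ) : SmoothSlab a b (fun _ _ => c) := contDiffOn_const

lemma time : SmoothSlab a b (fun t _ => t) := contDiffOn_fst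

lemma add (hf : SmoothSlab a b f) (hg : SmoothSlab a b g) :
    SmoothSlab a b (fun t θ => f t θ + g t θ) := ContDiffOn.add hf hg

lemma sub (hf : SmoothSlab a b f) (hg : SmoothSlab a b g) :
    SmoothSlab a b (fun t θ => f t θ - g t θ) := ContDiffOn.sub hf hg

lemma mul (hf : SmoothSlab a b f) (hg : SmoothSlab a b g) :
    SmoothSlab a b (fun t θ => f t θ * g t θ) := ContDiffOn.mul hf hg

lemma neg (hf : SmoothSlab a b f) :
    SmoothSlab a b (fun t θ => - f t θ) := ContDiffOn.neg hf

lemma const_mul (c : ℝ) (hf : SmoothSlab a b f) :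
    SmoothSlab a b (fun t θ => c * f t θ) := (const c).mul hf

lemma sq (hf : SmoothSlab a b f) :
    SmoothSlab a b (fun t θ => f t θ ^ 2) := ContDiffOn.pow hf 2

lemma exp (hf : SmoothSlab a b f) :
    SmoothSlab a b (fun t θ => Real.exp (f t θ)) := ContDiffOn.exp hf

/-- Differentiation under the integral over a period. -/
lemma hasDerivAt_integral (hf : SmoothSlab a b f) {t : ℝ} (ht : t ∈ Ioo a b) :
    HasDerivAt (fun s => ∫ θ in (0 : ℝ)..(2 * π), f s θ)
      (∫ θ in (0 : ℝ)..(2 * π), pt f t θ) t := by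
  obtain ⟨c, hc1, hc2⟩ := exists_between ht.1
  obtain ⟨d, hd1, hd2⟩ := exists_between ht.2
  have hsub : Icc c d ⊆ Ioo a b := fun x hx => ⟨hc1.trans_le hx.1, hx.2.trans_lt hd2⟩
  obtain ⟨B, hB⟩ := (isCompact_Icc.prod isCompact_Icc).exists_bound_of_continuousOn
    (hf.smooth_pt.continuousOn.mono (t := Icc c d ×ˢ Icc (0 : ℝ) (2 * π))
      (fun p hp => ⟨hsub hp.1, mem_univ _⟩))
  have h2π : (0 : ℝ) ≤ 2 * π := by positivity
  refine (intervalIntegral.hasDerivAt_integral_of_dominated_loc_of_deriv_le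
    (F' := fun s θ => pt f s θ) (bound := fun _ => B)
    (Icc_mem_nhds hc2 hd1) ?_ (hf.intervalIntegrable ht _ _) ?_ ?_ ?_ ?_).2
  · filter_upwards [Icc_mem_nhds hc2 hd1] with s hs
    exact (hf.continuous_θ (hsub hs)).aestronglyMeasurable
  · exact (hf.smooth_pt.continuous_θ ht).aestronglyMeasurable
  · refine Eventually.of_forall fun θ hθ s hs => ?_
    rw [uIoc_of_le h2π] at hθ
    exact hB (s, θ) ⟨hs, hθ.1.le, hθ.2⟩
  · exact intervalIntegrable_const
  · exact Eventually.of_forall fun θ _ s hs => hf.hasDerivAt_t (hsub hs) θ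

end SmoothSlab

/-- `f` is `2π`-periodic in the angle at all times in `(a, b)`. -/
def PerSlab (a b : ℝ) (f : ℝ → ℝ → ℝ) : Prop :=
  ∀ t ∈ Ioo a b, ∀ θ, f t (θ + 2 * π) = f t θ

lemma PerSlab.pth {a b : ℝ} {f : ℝ → ℝ → ℝ} (hf : PerSlab a b f) : PerSlab a b (pth f) := by
  intro t ht θ
  have h : (fun x => f t (x + 2 * π)) = fun x => f t x := funext fun x => hf t ht x
  have := deriv_comp_add_const (fun x => f t x) (2 * π) θ
  rw [h] at this
  exact this.symm

lemma PerSlab.pt {a b : ℝ} {f : ℝ → ℝ → ℝ} (hf : PerSlab a b f) : PerSlab a b (pt f) := by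
  intro t ht θ
  refine Filter.EventuallyEq.deriv_eq ?_
  filter_upwards [isOpen_Ioo.mem_nhds ht] with s hs using hf s hs θ

lemma PerSlab.exists_mem {a b : ℝ} {f : ℝ → ℝ → ℝ} (hf : PerSlab a b f) {t : ℝ} (ht : t ∈ Ioo a b)
    (θ : ℝ) : ∃ θ' ∈ Icc (0 : ℝ) (2 * π), f t θ = f t θ' := by
  have hp : Function.Periodic (fun x => f t x) (2 * π) := fun x => hf t ht x
  obtain ⟨y, hy, h⟩ := hp.exists_mem_Ico₀ (by positivity) θ
  exact ⟨y, ⟨hy.1, hy.2.le⟩, h⟩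

/-- A periodic smooth function is bounded on each time slice. -/
lemma SmoothSlab.bounded_slice {a b : ℝ} {f : ℝ → ℝ → ℝ} (hf : SmoothSlab a b f)
    (hp : PerSlab a b f) {t : ℝ} (ht : t ∈ Ioo a b) : ∃ C, 0 ≤ C ∧ ∀ θ, |f t θ| ≤ C := by
  obtain ⟨B, hB⟩ := isCompact_Icc.exists_bound_of_continuousOn
    ((hf.continuous_θ ht).continuousOn (s := Icc (0 : ℝ) (2 * π)))
  refine ⟨|B|, abs_nonneg _, fun θ => ?_⟩
  obtain ⟨θ', h, e⟩ := hp.exists_mem ht θ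
  rw [e]
  exact (hB θ' h).trans (le_abs_self _)

/-- The integral over a period of an angular derivative vanishes. -/
lemma SmoothSlab.integral_pth {a b : ℝ} {f : ℝ → ℝ → ℝ} (hf : SmoothSlab a b f)
    (hp : PerSlab a b f) {t : ℝ} (ht : t ∈ Ioo a b) :
    ∫ θ in (0 : ℝ)..(2 * π), pth f t θ = 0 := by
  rw [intervalIntegral.integral_eq_sub_of_hasDerivAt (fun x _ => hf.hasDerivAt_θ ht x)
    (hf.smooth_pth.intervalIntegrable ht _ _)]
  have := hp t ht 0
  rw [zero_add] at this
  rw [this, sub_self]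

/-- One-sided integration towards the past: a lower bound on the derivative bounds the
function from above at earlier times. -/
lemma past_le_of_deriv_ge {a T : ℝ} {g g' : ℝ → ℝ} {C : ℝ} (hC : 0 ≤ C)
    (hg : ∀ t ∈ Ioc a T, HasDerivAt g (g' t) t) (hC' : ∀ t ∈ Ioc a T, -C ≤ g' t)
    {t : ℝ} (ht : t ∈ Ioc a T) : g t ≤ g T + C * (T - a) := by
  have hsub : Icc t T ⊆ Ioc a T := fun x hx => ⟨ht.1.trans_le hx.1, hx.2⟩
  have := (convex_Icc t T).mul_sub_le_image_sub_of_le_deriv (f := g) (C := -C)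
    (fun x hx => (hg x (hsub hx)).continuousAt.continuousWithinAt)
    (fun x hx => (hg x (hsub (interior_subset hx))).differentiableAt.differentiableWithinAt)
    (fun x hx => by
      rw [(hg x (hsub (interior_subset hx))).deriv]; exact hC' x (hsub (interior_subset hx)))
    t ⟨le_rfl, ht.2⟩ T ⟨ht.2, le_rfl⟩ ht.2
  nlinarith [mul_le_mul_of_nonneg_left ht.1.le hC]

/-- A function with nonnegative derivative takes smaller values at earlier times. -/
lemma past_le_of_deriv_nonneg {a T : ℝ} {g g' : ℝ → ℝ}
    (hg : ∀ t ∈ Ioc a T, HasDerivAt g (g' t) t) (hC' : ∀ t ∈ Ioc a T, 0 ≤ g' t)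
    {t : ℝ} (ht : t ∈ Ioc a T) : g t ≤ g T := by
  have := past_le_of_deriv_ge le_rfl hg (by simpa using hC') ht
  linarith

/-! ### Uniform boundedness towards the past -/

/-- `f` is bounded on `(a, T] × ℝ`. -/
def BdPast (a T : ℝ) (f : ℝ → ℝ → ℝ) : Prop :=
  ∃ C : ℝ, ∀ t ∈ Ioc a T, ∀ θ : ℝ, |f t θ| ≤ C

namespace BdPast

variable {a T : ℝ} {f g : ℝ → ℝ → ℝ}

lemma const (c : ℝ) : BdPast a T (fun _ _ => c) := ⟨|c|, fun _ _ _ => le_rfl⟩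

lemma time (ha : 0 < a) : BdPast a T (fun t _ => t) :=
  ⟨T, fun t ht _ => by rw [abs_of_pos (ha.trans ht.1)]; exact ht.2⟩

lemma add (hf : BdPast a T f) (hg : BdPast a T g) : BdPast a T (fun t θ => f t θ + g t θ) := by
  obtain ⟨C, hC⟩ := hf
  obtain ⟨D, hD⟩ := hg
  exact ⟨C + D, fun t ht θ => (abs_add_le _ _).trans (add_le_add (hC t ht θ) (hD t ht θ))⟩

lemma mul (hf : BdPast a T f) (hg : BdPast a T g) : BdPast a T (fun t θ => f t θ * g t θ) := by
  obtain ⟨C, hC⟩ := hf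
  obtain ⟨D, hD⟩ := hg
  refine ⟨C * D, fun t ht θ => ?_⟩
  rw [abs_mul]
  exact mul_le_mul (hC t ht θ) (hD t ht θ) (abs_nonneg _) ((abs_nonneg _).trans (hC t ht θ))

lemma neg (hf : BdPast a T f) : BdPast a T (fun t θ => - f t θ) := by
  obtain ⟨C, hC⟩ := hf
  exact ⟨C, fun t ht θ => by rw [abs_neg]; exact hC t ht θ⟩

lemma sub (hf : BdPast a T f) (hg : BdPast a T g) : BdPast a T (fun t θ => f t θ - g t θ) := by
  simpa only [sub_eq_add_neg] using hf.add hg.neg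

lemma const_mul (c : ℝ) (hf : BdPast a T f) : BdPast a T (fun t θ => c * f t θ) :=
  (const c).mul hf

lemma exp (hf : BdPast a T f) : BdPast a T (fun t θ => Real.exp (f t θ)) := by
  obtain ⟨C, hC⟩ := hf
  refine ⟨Real.exp C, fun t ht θ => ?_⟩
  rw [abs_of_pos (Real.exp_pos _)]
  exact Real.exp_le_exp.2 ((le_abs_self _).trans (hC t ht θ))

lemma congr (hf : BdPast a T f) (h : ∀ t ∈ Ioc a T, ∀ θ, g t θ = f t θ) : BdPast a T g := by
  obtain ⟨C, hC⟩ := hf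
  exact ⟨C, fun t ht θ => by rw [h t ht θ]; exact hC t ht θ⟩

/-- A bound on the square gives a bound on the function. -/
lemma of_sq_le (hg : BdPast a T g) (h : ∀ t ∈ Ioc a T, ∀ θ, f t θ ^ 2 ≤ g t θ) :
    BdPast a T f := by
  obtain ⟨C, hC⟩ := hg
  refine ⟨1 + C, fun t ht θ => ?_⟩
  have h1 := (h t ht θ).trans ((le_abs_self _).trans (hC t ht θ))
  rw [← sq_abs] at h1
  nlinarith [sq_nonneg (|f t θ| - 1)]

/-- A bound on the time derivative integrates to a bound on the function. -/
lemma of_pt {b : ℝ} (hT : T ∈ Ioo a b) (hs : SmoothSlab a b f) (hp : PerSlab a b f)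
    (hf : BdPast a T (pt f)) : BdPast a T f := by
  obtain ⟨C, hC⟩ := hf
  obtain ⟨B, hB0, hB⟩ := hs.bounded_slice hp hT
  have hC0 : 0 ≤ C := (abs_nonneg _).trans (hC T ⟨hT.1, le_rfl⟩ 0)
  have hsub : ∀ t ∈ Ioc a T, t ∈ Ioo a b := fun t ht => ⟨ht.1, ht.2.trans_lt hT.2⟩
  refine ⟨B + C * (T - a), fun t ht θ => abs_le.2 ⟨?_, ?_⟩⟩
  · have := past_le_of_deriv_ge (g := fun s => - f s θ) (g' := fun s => - pt f s θ) hC0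
      (fun s hs' => (hs.hasDerivAt_t (hsub s hs') θ).neg)
      (fun s hs' => by have := (abs_le.1 (hC s hs' θ)).2; simpa using this) ht
    have h2 := (abs_le.1 (hB θ)).1
    linarith
  · have := past_le_of_deriv_ge (g := fun s => f s θ) (g' := fun s => pt f s θ) hC0
      (fun s hs' => hs.hasDerivAt_t (hsub s hs') θ)
      (fun s hs' => (abs_le.1 (hC s hs' θ)).1) ht
    have h2 := (abs_le.1 (hB θ)).2
    linarith

end BdPast

/-! ### A maximum principle for transport inequalities along two families of characteristics -/

lemma deriv_nonpos_of_right_max {h : ℝ → ℝ} {h' t T : ℝ} (hd : HasDerivAt h h' t) (htT : t < T)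
    (hmax : ∀ s ∈ Icc t T, h s ≤ h t) : h' ≤ 0 := by
  have h1 : Tendsto (slope h t) (nhdsWithin t (Ioi t)) (nhds h') :=
    (hasDerivWithinAt_iff_tendsto_slope' (by simp)).1 hd.hasDerivWithinAt
  refine le_of_tendsto h1 ?_
  filter_upwards [Ioo_mem_nhdsGT htT] with s hs
  rw [slope_def_field]
  exact div_nonpos_of_nonpos_of_nonneg (sub_nonpos.2 (hmax s ⟨hs.1.le, hs.2.le⟩))
    (sub_nonneg.2 hs.1.le)

/-- At a space-time maximum of `exp ((2K+1)(t-T)) (f + 1)` before the final time, the angular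
derivative of `f` vanishes and the transport inequality forces a strictly positive time
derivative; hence such a maximum, where `f` dominates `g`, can only sit at the final time. -/
lemma max_at_final_time {a b T K t₀ t θ c : ℝ} {f g : ℝ → ℝ → ℝ} (hT : T < b) (ha : a < t₀)
    (hK : 0 ≤ K) (hf : SmoothSlab a b f) (hf0 : 0 ≤ f t θ) (ht : t ∈ Icc t₀ T)
    (h1 : |pt f t θ - c * pth f t θ| ≤ K * (1 + f t θ + g t θ))
    (hfg : g t θ ≤ f t θ)
    (hmax : ∀ s ∈ Icc t₀ T, ∀ x, exp ((2 * K + 1) * (s - T)) * (f s x + 1)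
      ≤ exp ((2 * K + 1) * (t - T)) * (f t θ + 1)) : t = T := by
  by_contra hne
  have htT : t < T := lt_of_le_of_ne ht.2 hne
  have htab : t ∈ Ioo a b := ⟨ha.trans_le ht.1, htT.trans hT⟩
  have hθ : pth f t θ = 0 := by
    refine IsLocalMax.hasDerivAt_eq_zero (f := fun x => f t x) ?_ (hf.hasDerivAt_θ htab θ)
    refine Eventually.of_forall fun x => ?_
    have := le_of_mul_le_mul_left (hmax t ht x) (exp_pos _)
    simpa using this
  have hd : HasDerivAt (fun s => exp ((2 * K + 1) * (s - T)) * (f s θ + 1))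
      (exp ((2 * K + 1) * (t - T)) * ((2 * K + 1) * 1) * (f t θ + 1)
        + exp ((2 * K + 1) * (t - T)) * (pt f t θ)) t :=
    (((((hasDerivAt_id t).sub_const T).const_mul (2 * K + 1)).exp).mul
      ((hf.hasDerivAt_t htab θ).add_const 1))
  have hle := deriv_nonpos_of_right_max hd htT
    fun s hs => hmax s ⟨ht.1.trans hs.1, hs.2⟩ θ
  have h2 : 0 < (2 * K + 1) * (f t θ + 1) + pt f t θ := by
    rw [hθ, mul_zero, sub_zero] at h1
    have := (abs_le.1 h1).1
    nlinarith [mul_le_mul_of_nonneg_left hfg hK]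
  have h3 := mul_pos (exp_pos ((2 * K + 1) * (t - T))) h2
  nlinarith

/-- Nonnegative periodic `f`, `g` transported along the characteristics `∂ₜ ∓ c ∂_θ` with
linearly bounded sources stay bounded towards the past. -/
lemma bdPast_of_transport {a b T K : ℝ} {f g c : ℝ → ℝ → ℝ} (hT : T ∈ Ioo a b) (hK : 0 ≤ K)
    (hf : SmoothSlab a b f) (hg : SmoothSlab a b g) (pf : PerSlab a b f) (pg : PerSlab a b g)
    (hf0 : ∀ t ∈ Ioc a T, ∀ θ, 0 ≤ f t θ) (hg0 : ∀ t ∈ Ioc a T, ∀ θ, 0 ≤ g t θ)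
    (h1 : ∀ t ∈ Ioc a T, ∀ θ, |pt f t θ - c t θ * pth f t θ| ≤ K * (1 + f t θ + g t θ))
    (h2 : ∀ t ∈ Ioc a T, ∀ θ, |pt g t θ - (- c t θ) * pth g t θ| ≤ K * (1 + g t θ + f t θ)) :
    BdPast a T f ∧ BdPast a T g := by
  obtain ⟨B, hB0, hB⟩ := hf.bounded_slice pf hT
  obtain ⟨D, hD0, hD⟩ := hg.bounded_slice pg hT
  have key : ∀ t₀ ∈ Ioc a T, ∀ θ, exp ((2 * K + 1) * (t₀ - T)) * (f t₀ θ + 1) ≤ B + D + 1 ∧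
      exp ((2 * K + 1) * (t₀ - T)) * (g t₀ θ + 1) ≤ B + D + 1 := by
    intro t₀ ht₀
    have hsub : ∀ t ∈ Icc t₀ T, t ∈ Ioc a T := fun t ht => ⟨ht₀.1.trans_le ht.1, ht.2⟩
    have hsub' : ∀ t ∈ Icc t₀ T, t ∈ Ioo a b := fun t ht => ⟨ht₀.1.trans_le ht.1, ht.2.trans_lt hT.2⟩
    have hcont : ∀ k : ℝ → ℝ → ℝ, SmoothSlab a b k → ContinuousOn
        (fun p : ℝ × ℝ => exp ((2 * K + 1) * (p.1 - T)) * (k p.1 p.2 + 1))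
        (Icc t₀ T ×ˢ Icc (0 : ℝ) (2 * π)) := by
      intro k hk
      have := hk.continuousOn.mono (t := Icc t₀ T ×ˢ Icc (0 : ℝ) (2 * π))
        (fun p hp => ⟨hsub' _ hp.1, mem_univ _⟩)
      fun_prop
    obtain ⟨p, hp, hpmax⟩ := (isCompact_Icc.prod isCompact_Icc).exists_isMaxOn
      (s := Icc t₀ T ×ˢ Icc (0 : ℝ) (2 * π))
      ⟨(t₀, 0), ⟨le_rfl, ht₀.2⟩, le_rfl, by positivity⟩ ((hcont f hf).sup (hcont g hg))
    have hall : ∀ s ∈ Icc t₀ T, ∀ x,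
        exp ((2 * K + 1) * (s - T)) * (f s x + 1)
          ≤ max (exp ((2 * K + 1) * (p.1 - T)) * (f p.1 p.2 + 1))
            (exp ((2 * K + 1) * (p.1 - T)) * (g p.1 p.2 + 1)) ∧
        exp ((2 * K + 1) * (s - T)) * (g s x + 1)
          ≤ max (exp ((2 * K + 1) * (p.1 - T)) * (f p.1 p.2 + 1))
            (exp ((2 * K + 1) * (p.1 - T)) * (g p.1 p.2 + 1)) := by
      intro s hs x
      obtain ⟨x', hx', e⟩ := pf.exists_mem (hsub' s hs) x
      obtain ⟨x'', hx'', e'⟩ := pg.exists_mem (hsub' s hs) x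
      rw [e, e']
      exact ⟨(le_max_left _ _).trans (hpmax (a := (s, x')) ⟨hs, hx'⟩),
        (le_max_right _ _).trans (hpmax (a := (s, x'')) ⟨hs, hx''⟩)⟩
    have hfin : max (exp ((2 * K + 1) * (p.1 - T)) * (f p.1 p.2 + 1))
        (exp ((2 * K + 1) * (p.1 - T)) * (g p.1 p.2 + 1)) ≤ B + D + 1 := by
      rcases le_total (g p.1 p.2) (f p.1 p.2) with hle | hle
      · have em : max (exp ((2 * K + 1) * (p.1 - T)) * (f p.1 p.2 + 1))
            (exp ((2 * K + 1) * (p.1 - T)) * (g p.1 p.2 + 1))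
            = exp ((2 * K + 1) * (p.1 - T)) * (f p.1 p.2 + 1) :=
          max_eq_left (by gcongr)
        rw [em] at hall ⊢
        have hpT := max_at_final_time hT.2 ht₀.1 hK hf (hf0 _ (hsub _ hp.1) _) hp.1
          (h1 _ (hsub _ hp.1) _) hle (fun s hs x => (hall s hs x).1)
        rw [hpT, sub_self, mul_zero, exp_zero, one_mul]
        linarith [(abs_le.1 (hB p.2)).2]
      · have em : max (exp ((2 * K + 1) * (p.1 - T)) * (f p.1 p.2 + 1))
            (exp ((2 * K + 1) * (p.1 - T)) * (g p.1 p.2 + 1))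
            = exp ((2 * K + 1) * (p.1 - T)) * (g p.1 p.2 + 1) :=
          max_eq_right (by gcongr)
        rw [em] at hall ⊢
        have hpT := max_at_final_time hT.2 ht₀.1 hK hg (hg0 _ (hsub _ hp.1) _) hp.1
          (h2 _ (hsub _ hp.1) _) hle (fun s hs x => (hall s hs x).2)
        rw [hpT, sub_self, mul_zero, exp_zero, one_mul]
        linarith [(abs_le.1 (hD p.2)).2]
    exact fun θ => ⟨((hall t₀ ⟨le_rfl, ht₀.2⟩ θ).1).trans hfin,
      ((hall t₀ ⟨le_rfl, ht₀.2⟩ θ).2).trans hfin⟩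
  have concl : ∀ t ∈ Ioc a T, ∀ y, 0 ≤ y →
      exp ((2 * K + 1) * (t - T)) * (y + 1) ≤ B + D + 1 →
      |y| ≤ exp ((2 * K + 1) * (T - a)) * (B + D + 1) := by
    intro t ht y hy h
    rw [abs_of_nonneg hy]
    have e : y + 1 = exp ((2 * K + 1) * (T - t)) * (exp ((2 * K + 1) * (t - T)) * (y + 1)) := by
      rw [← mul_assoc, ← exp_add,
        show (2 * K + 1) * (T - t) + (2 * K + 1) * (t - T) = 0 by ring, exp_zero, one_mul]
    have h3 : exp ((2 * K + 1) * (T - t)) ≤ exp ((2 * K + 1) * (T - a)) := by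
      have := ht.1.le
      gcongr
    have h4 := mul_le_mul h3 h (mul_nonneg (exp_pos _).le (by linarith)) (exp_pos _).le
    linarith
  exact ⟨⟨_, fun t ht θ => concl t ht _ (hf0 t ht θ) (key t ht θ).1⟩,
    ⟨_, fun t ht θ => concl t ht _ (hg0 t ht θ) (key t ht θ).2⟩⟩

/-! ### The system in terms of `β = (1/2) log α` -/

/-- The exponent `w = 2β + 2λφ + 2η - 2U`, so that the potential `α Q² e^{2λφ+2(η-U)}` is
`Q² e^w` when `α = e^{2β}`. -/
def wFun (lam : ℝ) (β η U φ : ℝ → ℝ → ℝ) (t θ : ℝ) : ℝ :=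
  2 * β t θ + 2 * lam * φ t θ + 2 * η t θ - 2 * U t θ

/-- The potential `V = α Q² e^{2λφ+2(η-U)} = Q² e^w`. -/
def potV (Q lam : ℝ) (β η U φ : ℝ → ℝ → ℝ) (t θ : ℝ) : ℝ :=
  Q ^ 2 * exp (wFun lam β η U φ t θ)

/-- The null energy density: the square length of the derivative `∂ₜ + ε e^β ∂_θ` of
`(U, A, φ, σ)` in the target metric; it is used for `ε = 1` and `ε = -1`. -/
def dens (lam ε : ℝ) (β U A φ σ : ℝ → ℝ → ℝ) (t θ : ℝ) : ℝ :=
  (pt U t θ + ε * exp (β t θ) * pth U t θ) ^ 2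
  + exp (4 * U t θ) / (4 * t ^ 2) * (pt A t θ + ε * exp (β t θ) * pth A t θ) ^ 2
  + 1 / 4 * ((pt φ t θ + ε * exp (β t θ) * pth φ t θ) ^ 2
    + exp (2 * lam * φ t θ) * (pt σ t θ + ε * exp (β t θ) * pth σ t θ) ^ 2)

/-- The Gowdy symmetric IIA system for `α = e^{2β}`, together with smoothness and periodicity. -/
structure BetaSys (Q lam Tm Tp : ℝ) (β η U A φ σ : ℝ → ℝ → ℝ) : Prop where
  hTm : 0 < Tm
  sβ : SmoothSlab Tm Tp β
  sη : SmoothSlab Tm Tp η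
  sU : SmoothSlab Tm Tp U
  sA : SmoothSlab Tm Tp A
  sφ : SmoothSlab Tm Tp φ
  sσ : SmoothSlab Tm Tp σ
  pβ : PerSlab Tm Tp β
  pη : PerSlab Tm Tp η
  pU : PerSlab Tm Tp U
  pA : PerSlab Tm Tp A
  pφ : PerSlab Tm Tp φ
  pσ : PerSlab Tm Tp σ
  beta_t : ∀ t ∈ Ioo Tm Tp, ∀ θ, pt β t θ = -(1 / 2) * t * potV Q lam β η U φ t θ
  eta_t : ∀ t ∈ Ioo Tm Tp, ∀ θ, pt η t θ =
    t * ((dens lam 1 β U A φ σ t θ + dens lam (-1) β U A φ σ t θ) / 2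
      + potV Q lam β η U φ t θ / 4)
  eta_θ : ∀ t ∈ Ioo Tm Tp, ∀ θ, pth η t θ + pth β t θ =
    t * exp (- β t θ) * ((dens lam 1 β U A φ σ t θ - dens lam (-1) β U A φ σ t θ) / 2)
  U_tt : ∀ t ∈ Ioo Tm Tp, ∀ θ, pt (pt U) t θ =
    exp (β t θ) ^ 2 * pth (pth U) t θ - pt U t θ / t + pt β t θ * pt U t θ
    + exp (β t θ) ^ 2 * pth β t θ * pth U t θ
    + exp (4 * U t θ) / (2 * t ^ 2) * (pt A t θ ^ 2 - exp (β t θ) ^ 2 * pth A t θ ^ 2)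
    + potV Q lam β η U φ t θ / 4
  A_tt : ∀ t ∈ Ioo Tm Tp, ∀ θ, pt (pt A) t θ =
    exp (β t θ) ^ 2 * pth (pth A) t θ + pt A t θ / t + pt β t θ * pt A t θ
    + exp (β t θ) ^ 2 * pth β t θ * pth A t θ
    - 4 * (pt A t θ * pt U t θ - exp (β t θ) ^ 2 * pth A t θ * pth U t θ)
  φ_tt : ∀ t ∈ Ioo Tm Tp, ∀ θ, pt (pt φ) t θ =
    exp (β t θ) ^ 2 * pth (pth φ) t θ - pt φ t θ / t + pt β t θ * pt φ t θ
    + exp (β t θ) ^ 2 * pth β t θ * pth φ t θ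
    + lam * exp (2 * lam * φ t θ) * (pt σ t θ ^ 2 - exp (β t θ) ^ 2 * pth σ t θ ^ 2)
    - lam * potV Q lam β η U φ t θ
  σ_tt : ∀ t ∈ Ioo Tm Tp, ∀ θ, pt (pt σ) t θ =
    exp (β t θ) ^ 2 * pth (pth σ) t θ - pt σ t θ / t + pt β t θ * pt σ t θ
    + exp (β t θ) ^ 2 * pth β t θ * pth σ t θ
    - 2 * lam * (pt φ t θ * pt σ t θ - exp (β t θ) ^ 2 * pth φ t θ * pth σ t θ)

/-- The derivative of the null energy density along an arbitrary curve. -/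
lemma hasDerivAt_dens_curve (lam ε : ℝ) {T b u u0 u1 a0 a1 p p0 p1 q0 q1 : ℝ → ℝ}
    {T' b' u' u0' u1' a0' a1' p' p0' p1' q0' q1' x : ℝ} (hT0 : T x ≠ 0)
    (hT : HasDerivAt T T' x) (hb : HasDerivAt b b' x) (hu : HasDerivAt u u' x)
    (hu0 : HasDerivAt u0 u0' x) (hu1 : HasDerivAt u1 u1' x) (ha0 : HasDerivAt a0 a0' x)
    (ha1 : HasDerivAt a1 a1' x) (hp : HasDerivAt p p' x) (hp0 : HasDerivAt p0 p0' x)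
    (hp1 : HasDerivAt p1 p1' x) (hq0 : HasDerivAt q0 q0' x) (hq1 : HasDerivAt q1 q1' x) :
    HasDerivAt (fun y => (u0 y + ε * exp (b y) * u1 y) ^ 2
        + exp (4 * u y) / (4 * T y ^ 2) * (a0 y + ε * exp (b y) * a1 y) ^ 2
        + 1 / 4 * ((p0 y + ε * exp (b y) * p1 y) ^ 2
          + exp (2 * lam * p y) * (q0 y + ε * exp (b y) * q1 y) ^ 2))
      (2 * (u0 x + ε * exp (b x) * u1 x) * (u0' + ε * exp (b x) * (b' * u1 x + u1'))
        + exp (4 * u x) / (4 * T x ^ 2) * (4 * u' - 2 * T' / T x)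
          * (a0 x + ε * exp (b x) * a1 x) ^ 2
        + exp (4 * u x) / (4 * T x ^ 2) * (2 * (a0 x + ε * exp (b x) * a1 x)
          * (a0' + ε * exp (b x) * (b' * a1 x + a1')))
        + 1 / 4 * (2 * (p0 x + ε * exp (b x) * p1 x) * (p0' + ε * exp (b x) * (b' * p1 x + p1'))
          + exp (2 * lam * p x) * (2 * lam * p') * (q0 x + ε * exp (b x) * q1 x) ^ 2
          + exp (2 * lam * p x) * (2 * (q0 x + ε * exp (b x) * q1 x)
            * (q0' + ε * exp (b x) * (b' * q1 x + q1'))))) x := by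
  have hs := (hb.exp).const_mul ε
  have hc := ((hu.const_mul 4).exp).div ((hT.pow 2).const_mul 4) (by simpa using hT0)
  have h := (((hu0.add (hs.mul hu1)).pow 2).add (hc.mul ((ha0.add (hs.mul ha1)).pow 2))).add
    ((((hp0.add (hs.mul hp1)).pow 2).add
      (((hp.const_mul (2 * lam)).exp).mul ((hq0.add (hs.mul hq1)).pow 2))).const_mul (1 / 4))
  refine HasDerivAt.congr_deriv h ?_
  simp only [Pi.add_apply, Pi.mul_apply, Pi.pow_apply, Pi.div_apply]
  push_cast
  field_simp
  ring

namespace BetaSys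

variable {Q lam Tm Tp : ℝ} {β η U A φ σ : ℝ → ℝ → ℝ} {t : ℝ}

lemma pos_of_mem (h : BetaSys Q lam Tm Tp β η U A φ σ) (ht : t ∈ Ioo Tm Tp) : 0 < t :=
  h.hTm.trans ht.1

lemma smooth_w (h : BetaSys Q lam Tm Tp β η U A φ σ) : SmoothSlab Tm Tp (wFun lam β η U φ) :=
  (((h.sβ.const_mul 2).add (h.sφ.const_mul (2 * lam))).add (h.sη.const_mul 2)).sub
    (h.sU.const_mul 2)

lemma per_w (h : BetaSys Q lam Tm Tp β η U A φ σ) : PerSlab Tm Tp (wFun lam β η U φ) := by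
  intro t ht θ
  simp only [wFun, h.pβ t ht, h.pη t ht, h.pU t ht, h.pφ t ht]

lemma smooth_V (h : BetaSys Q lam Tm Tp β η U A φ σ) : SmoothSlab Tm Tp (potV Q lam β η U φ) :=
  h.smooth_w.exp.const_mul (Q ^ 2)

lemma smooth_dens (h : BetaSys Q lam Tm Tp β η U A φ σ) (ε : ℝ) :
    SmoothSlab Tm Tp (dens lam ε β U A φ σ) := by
  have hn : ∀ f, SmoothSlab Tm Tp f →
      SmoothSlab Tm Tp (fun t θ => (pt f t θ + ε * exp (β t θ) * pth f t θ) ^ 2) := fun f hf =>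
    (hf.smooth_pt.add ((h.sβ.exp.const_mul ε).mul hf.smooth_pth)).sq
  have hc : SmoothSlab Tm Tp (fun t θ => exp (4 * U t θ) / (4 * t ^ 2)) := by
    refine ContDiffOn.div (h.sU.const_mul 4).exp (SmoothSlab.time.sq.const_mul 4) ?_
    intro p hp
    have := h.pos_of_mem hp.1
    positivity
  exact ((hn U h.sU).add (hc.mul (hn A h.sA))).add
    (((hn φ h.sφ).add (((h.sφ.const_mul (2 * lam)).exp).mul (hn σ h.sσ))).const_mul (1 / 4))

lemma per_dens (h : BetaSys Q lam Tm Tp β η U A φ σ) (ε : ℝ) :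
    PerSlab Tm Tp (dens lam ε β U A φ σ) := by
  intro t ht θ
  simp only [dens, h.pβ t ht, h.pU t ht, h.pφ t ht, h.pU.pt t ht, h.pU.pth t ht, h.pA.pt t ht,
    h.pA.pth t ht, h.pφ.pt t ht, h.pφ.pth t ht, h.pσ.pt t ht, h.pσ.pth t ht]

/-- The transport equation of the null energy density along the opposite characteristic. The
wave-map terms and the terms containing `α'` cancel. -/
lemma transport (h : BetaSys Q lam Tm Tp β η U A φ σ) {ε : ℝ} (hε : ε = 1 ∨ ε = -1)
    (ht : t ∈ Ioo Tm Tp) (θ : ℝ) :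
    pt (dens lam ε β U A φ σ) t θ - ε * exp (β t θ) * pth (dens lam ε β U A φ σ) t θ =
      2 * pt β t θ * dens lam ε β U A φ σ t θ
      - 2 / t * ((pt U t θ + ε * exp (β t θ) * pth U t θ) * pt U t θ
        + 1 / 4 * ((pt φ t θ + ε * exp (β t θ) * pth φ t θ) * pt φ t θ
          + exp (2 * lam * φ t θ) * ((pt σ t θ + ε * exp (β t θ) * pth σ t θ) * pt σ t θ))
        + exp (4 * U t θ) / (4 * t ^ 2)
          * ((pt A t θ + ε * exp (β t θ) * pth A t θ) * (ε * exp (β t θ) * pth A t θ)))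
      + potV Q lam β η U φ t θ / 2 * ((pt U t θ + ε * exp (β t θ) * pth U t θ)
        - lam * (pt φ t θ + ε * exp (β t θ) * pth φ t θ)) := by
  have ht0 : t ≠ 0 := (h.pos_of_mem ht).ne'
  have e1 : pt (dens lam ε β U A φ σ) t θ = _ :=
    (hasDerivAt_dens_curve lam ε (T := fun s => s) (x := t) ht0 (hasDerivAt_id t)
      (h.sβ.hasDerivAt_t ht θ) (h.sU.hasDerivAt_t ht θ) (h.sU.smooth_pt.hasDerivAt_t ht θ)
      (h.sU.smooth_pth.hasDerivAt_t ht θ) (h.sA.smooth_pt.hasDerivAt_t ht θ)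
      (h.sA.smooth_pth.hasDerivAt_t ht θ) (h.sφ.hasDerivAt_t ht θ)
      (h.sφ.smooth_pt.hasDerivAt_t ht θ) (h.sφ.smooth_pth.hasDerivAt_t ht θ)
      (h.sσ.smooth_pt.hasDerivAt_t ht θ) (h.sσ.smooth_pth.hasDerivAt_t ht θ)).deriv
  have e2 : pth (dens lam ε β U A φ σ) t θ = _ :=
    (hasDerivAt_dens_curve lam ε (T := fun _ => t) (x := θ) ht0 (hasDerivAt_const θ t)
      (h.sβ.hasDerivAt_θ ht θ) (h.sU.hasDerivAt_θ ht θ) (h.sU.smooth_pt.hasDerivAt_θ ht θ)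
      (h.sU.smooth_pth.hasDerivAt_θ ht θ) (h.sA.smooth_pt.hasDerivAt_θ ht θ)
      (h.sA.smooth_pth.hasDerivAt_θ ht θ) (h.sφ.hasDerivAt_θ ht θ)
      (h.sφ.smooth_pt.hasDerivAt_θ ht θ) (h.sφ.smooth_pth.hasDerivAt_θ ht θ)
      (h.sσ.smooth_pt.hasDerivAt_θ ht θ) (h.sσ.smooth_pth.hasDerivAt_θ ht θ)).deriv
  rw [e1, e2, h.sU.pt_pth ht, h.sA.pt_pth ht, h.sφ.pt_pth ht, h.sσ.pt_pth ht, h.U_tt t ht,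
    h.A_tt t ht, h.φ_tt t ht, h.σ_tt t ht]
  simp only [dens]
  generalize exp (4 * U t θ) = c
  generalize exp (2 * lam * φ t θ) = d
  generalize exp (β t θ) = s
  generalize potV Q lam β η U φ t θ = V
  rcases hε with rfl | rfl <;> ring

end BetaSys

/-! ### The energy and pointwise identities -/

/-- The energy density `𝓔`, as the mean of the two null energy densities. -/
def eDen (lam : ℝ) (β U A φ σ : ℝ → ℝ → ℝ) (t θ : ℝ) : ℝ :=
  (dens lam 1 β U A φ σ t θ + dens lam (-1) β U A φ σ t θ) / 2

/-- The integrand `α^{-1/2} (𝓔 + V/4)` of the energy `E`. -/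
def enDen (Q lam : ℝ) (β η U A φ σ : ℝ → ℝ → ℝ) (t θ : ℝ) : ℝ :=
  exp (- β t θ) * (eDen lam β U A φ σ t θ + potV Q lam β η U φ t θ / 4)

lemma dens_nonneg (lam ε : ℝ) (β U A φ σ : ℝ → ℝ → ℝ) (t θ : ℝ) :
    0 ≤ dens lam ε β U A φ σ t θ := by
  unfold dens
  positivity

lemma eDen_nonneg (lam : ℝ) (β U A φ σ : ℝ → ℝ → ℝ) (t θ : ℝ) :
    0 ≤ eDen lam β U A φ σ t θ := by
  have h1 := dens_nonneg lam 1 β U A φ σ t θ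
  have h2 := dens_nonneg lam (-1) β U A φ σ t θ
  unfold eDen
  linarith

lemma eDen_eq (lam : ℝ) (β U A φ σ : ℝ → ℝ → ℝ) (t θ : ℝ) :
    eDen lam β U A φ σ t θ =
      pt U t θ ^ 2 + (exp (β t θ) * pth U t θ) ^ 2
      + exp (4 * U t θ) / (4 * t ^ 2) * (pt A t θ ^ 2 + (exp (β t θ) * pth A t θ) ^ 2)
      + 1 / 4 * (pt φ t θ ^ 2 + (exp (β t θ) * pth φ t θ) ^ 2
        + exp (2 * lam * φ t θ) * (pt σ t θ ^ 2 + (exp (β t θ) * pth σ t θ) ^ 2)) := by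
  unfold eDen dens
  ring

lemma potV_nonneg (Q lam : ℝ) (β η U φ : ℝ → ℝ → ℝ) (t θ : ℝ) : 0 ≤ potV Q lam β η U φ t θ := by
  unfold potV
  positivity

lemma potV_pos {Q : ℝ} (hQ : Q ≠ 0) (lam : ℝ) (β η U φ : ℝ → ℝ → ℝ) (t θ : ℝ) :
    0 < potV Q lam β η U φ t θ := by
  unfold potV
  positivity

lemma eDen_ge (lam : ℝ) (β U A φ σ : ℝ → ℝ → ℝ) (t θ : ℝ) :
    pt U t θ ^ 2 + 1 / 4 * (pt φ t θ ^ 2 + exp (2 * lam * φ t θ) * pt σ t θ ^ 2)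
      ≤ eDen lam β U A φ σ t θ := by
  rw [eDen_eq]
  have h1 : 0 ≤ exp (4 * U t θ) / (4 * t ^ 2)
      * (pt A t θ ^ 2 + (exp (β t θ) * pth A t θ) ^ 2) := by positivity
  have h2 : 0 ≤ exp (2 * lam * φ t θ) * (exp (β t θ) * pth σ t θ) ^ 2 := by positivity
  nlinarith [sq_nonneg (exp (β t θ) * pth U t θ), sq_nonneg (exp (β t θ) * pth φ t θ)]

lemma eDen_ge_space (lam : ℝ) (β U A φ σ : ℝ → ℝ → ℝ) (t θ : ℝ) :
    (exp (β t θ) * pth U t θ) ^ 2 + 1 / 4 * (exp (β t θ) * pth φ t θ) ^ 2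
      ≤ eDen lam β U A φ σ t θ := by
  rw [eDen_eq]
  have h1 : 0 ≤ exp (4 * U t θ) / (4 * t ^ 2)
      * (pt A t θ ^ 2 + (exp (β t θ) * pth A t θ) ^ 2) := by positivity
  have h2 : 0 ≤ exp (2 * lam * φ t θ) * (pt σ t θ ^ 2 + (exp (β t θ) * pth σ t θ) ^ 2) := by
    positivity
  nlinarith [sq_nonneg (pt U t θ), sq_nonneg (pt φ t θ)]

namespace BetaSys

variable {Q lam Tm Tp : ℝ} {β η U A φ σ : ℝ → ℝ → ℝ} {t : ℝ}

lemma smooth_eDen (h : BetaSys Q lam Tm Tp β η U A φ σ) :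
    SmoothSlab Tm Tp (eDen lam β U A φ σ) := by
  have := ((h.smooth_dens 1).add (h.smooth_dens (-1))).const_mul (1 / 2)
  refine ContDiffOn.congr this fun p _ => ?_
  simp only [eDen]
  ring

lemma smooth_n (h : BetaSys Q lam Tm Tp β η U A φ σ) :
    SmoothSlab Tm Tp (fun t θ => exp (- β t θ)) := h.sβ.neg.exp

lemma smooth_enDen (h : BetaSys Q lam Tm Tp β η U A φ σ) :
    SmoothSlab Tm Tp (enDen Q lam β η U A φ σ) := by
  have := h.smooth_n.mul (h.smooth_eDen.add (h.smooth_V.const_mul (1 / 4)))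
  refine ContDiffOn.congr this fun p _ => ?_
  simp only [enDen]
  ring

lemma pt_w (h : BetaSys Q lam Tm Tp β η U A φ σ) (ht : t ∈ Ioo Tm Tp) (θ : ℝ) :
    pt (wFun lam β η U φ) t θ = 2 * t * eDen lam β U A φ σ t θ
      - t * potV Q lam β η U φ t θ / 2 + 2 * lam * pt φ t θ - 2 * pt U t θ := by
  have e : pt (wFun lam β η U φ) t θ = _ :=
    (((((h.sβ.hasDerivAt_t ht θ).const_mul 2).add ((h.sφ.hasDerivAt_t ht θ).const_mul (2 * lam))).add
      ((h.sη.hasDerivAt_t ht θ).const_mul 2)).sub ((h.sU.hasDerivAt_t ht θ).const_mul 2)).deriv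
  rw [e, h.beta_t t ht, h.eta_t t ht, eDen]
  ring

lemma pth_w (h : BetaSys Q lam Tm Tp β η U A φ σ) (ht : t ∈ Ioo Tm Tp) (θ : ℝ) :
    pth (wFun lam β η U φ) t θ = 2 * (pth η t θ + pth β t θ) + 2 * lam * pth φ t θ
      - 2 * pth U t θ := by
  have e : pth (wFun lam β η U φ) t θ = _ :=
    (((((h.sβ.hasDerivAt_θ ht θ).const_mul 2).add ((h.sφ.hasDerivAt_θ ht θ).const_mul (2 * lam))).add
      ((h.sη.hasDerivAt_θ ht θ).const_mul 2)).sub ((h.sU.hasDerivAt_θ ht θ).const_mul 2)).deriv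
  rw [e]
  ring

lemma pt_V (h : BetaSys Q lam Tm Tp β η U A φ σ) (ht : t ∈ Ioo Tm Tp) (θ : ℝ) :
    pt (potV Q lam β η U φ) t θ = potV Q lam β η U φ t θ * pt (wFun lam β η U φ) t θ := by
  have e : pt (potV Q lam β η U φ) t θ = _ :=
    (((h.smooth_w.hasDerivAt_t ht θ).exp).const_mul (Q ^ 2)).deriv
  rw [e, potV]
  ring

lemma pth_V (h : BetaSys Q lam Tm Tp β η U A φ σ) (ht : t ∈ Ioo Tm Tp) (θ : ℝ) :
    pth (potV Q lam β η U φ) t θ = potV Q lam β η U φ t θ * pth (wFun lam β η U φ) t θ := by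
  have e : pth (potV Q lam β η U φ) t θ = _ :=
    (((h.smooth_w.hasDerivAt_θ ht θ).exp).const_mul (Q ^ 2)).deriv
  rw [e, potV]
  ring

lemma pt_n (h : BetaSys Q lam Tm Tp β η U A φ σ) (ht : t ∈ Ioo Tm Tp) (θ : ℝ) :
    pt (fun t θ => exp (- β t θ)) t θ =
      exp (- β t θ) * (t * potV Q lam β η U φ t θ / 2) := by
  have e : pt (fun t θ => exp (- β t θ)) t θ = _ := ((h.sβ.hasDerivAt_t ht θ).neg.exp).deriv
  rw [e, h.beta_t t ht]
  simp only [Pi.neg_apply]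
  ring

/-- The local energy balance: up to a total angular derivative, the energy density decreases at
a rate controlled by itself. -/
lemma energy_balance (h : BetaSys Q lam Tm Tp β η U A φ σ) (ht : t ∈ Ioo Tm Tp) (θ : ℝ) :
    pt (enDen Q lam β η U A φ σ) t θ =
      1 / 2 * (pth (dens lam 1 β U A φ σ) t θ - pth (dens lam (-1) β U A φ σ) t θ)
      - 2 / t * (exp (- β t θ) * (pt U t θ ^ 2
          + 1 / 4 * (pt φ t θ ^ 2 + exp (2 * lam * φ t θ) * pt σ t θ ^ 2)
          + exp (4 * U t θ) / (4 * t ^ 2) * (exp (β t θ) * pth A t θ) ^ 2)) := by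
  have e : pt (enDen Q lam β η U A φ σ) t θ = _ :=
    (((h.sβ.hasDerivAt_t ht θ).neg.exp).mul
      (((((h.smooth_dens 1).hasDerivAt_t ht θ).add
        ((h.smooth_dens (-1)).hasDerivAt_t ht θ)).div_const 2).add
      ((h.smooth_V.hasDerivAt_t ht θ).div_const 4))).deriv
  have t1 := h.transport (Or.inl rfl) ht θ
  have t2 := h.transport (Or.inr rfl) ht θ
  have hs : exp (- β t θ) * exp (β t θ) = 1 := by rw [← exp_add]; simp
  have t1' := eq_add_of_sub_eq t1
  have t2' := eq_add_of_sub_eq t2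
  rw [e, h.pt_V ht, h.pt_w ht, t1', t2', h.beta_t t ht]
  simp only [Pi.add_apply, Pi.neg_apply, eDen]
  generalize pth (dens lam 1 β U A φ σ) t θ = X1
  generalize pth (dens lam (-1) β U A φ σ) t θ = X2
  generalize dens lam 1 β U A φ σ t θ = D1
  generalize dens lam (-1) β U A φ σ t θ = D2
  generalize exp (4 * U t θ) = c
  generalize exp (2 * lam * φ t θ) = d
  generalize potV Q lam β η U φ t θ = V
  generalize exp (β t θ) = s at *
  generalize exp (- β t θ) = n at *
  linear_combination (1 / 2 * (X1 - X2)) * hs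

lemma energy_balance_bounds (h : BetaSys Q lam Tm Tp β η U A φ σ) (ht : t ∈ Ioo Tm Tp) (θ : ℝ) :
    - (2 / t) * enDen Q lam β η U A φ σ t θ ≤ pt (enDen Q lam β η U A φ σ) t θ -
      1 / 2 * (pth (dens lam 1 β U A φ σ) t θ - pth (dens lam (-1) β U A φ σ) t θ) ∧
    pt (enDen Q lam β η U A φ σ) t θ -
      1 / 2 * (pth (dens lam 1 β U A φ σ) t θ - pth (dens lam (-1) β U A φ σ) t θ) ≤ 0 := by
  have ht0 := h.pos_of_mem ht
  rw [h.energy_balance ht]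
  have hR0 : 0 ≤ 2 / t * (exp (- β t θ) * (pt U t θ ^ 2
          + 1 / 4 * (pt φ t θ ^ 2 + exp (2 * lam * φ t θ) * pt σ t θ ^ 2)
          + exp (4 * U t θ) / (4 * t ^ 2) * (exp (β t θ) * pth A t θ) ^ 2)) := by positivity
  have hR : 2 / t * (exp (- β t θ) * (pt U t θ ^ 2
          + 1 / 4 * (pt φ t θ ^ 2 + exp (2 * lam * φ t θ) * pt σ t θ ^ 2)
          + exp (4 * U t θ) / (4 * t ^ 2) * (exp (β t θ) * pth A t θ) ^ 2))
      ≤ 2 / t * enDen Q lam β η U A φ σ t θ := by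
    unfold enDen
    have hV := potV_nonneg Q lam β η U φ t θ
    refine mul_le_mul_of_nonneg_left (mul_le_mul_of_nonneg_left ?_ (exp_pos _).le)
      (by positivity)
    rw [eDen_eq]
    have h1 : 0 ≤ exp (4 * U t θ) / (4 * t ^ 2) * pt A t θ ^ 2 := by positivity
    have h2 : 0 ≤ exp (2 * lam * φ t θ) * (exp (β t θ) * pth σ t θ) ^ 2 := by positivity
    nlinarith [sq_nonneg (exp (β t θ) * pth U t θ), sq_nonneg (exp (β t θ) * pth φ t θ)]
  constructor <;> linarith

/-- The energy `E` is nonincreasing in time while `t² E` is nondecreasing. -/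
lemma energy_deriv (h : BetaSys Q lam Tm Tp β η U A φ σ) (ht : t ∈ Ioo Tm Tp) :
    - (2 / t) * (∫ θ in (0 : ℝ)..(2 * π), enDen Q lam β η U A φ σ t θ)
      ≤ ∫ θ in (0 : ℝ)..(2 * π), pt (enDen Q lam β η U A φ σ) t θ ∧
    ∫ θ in (0 : ℝ)..(2 * π), pt (enDen Q lam β η U A φ σ) t θ ≤ 0 := by
  have h2π : (0 : ℝ) ≤ 2 * π := by positivity
  have i1 := h.smooth_enDen.smooth_pt.intervalIntegrable ht 0 (2 * π)
  have i2 := (h.smooth_dens 1).smooth_pth.intervalIntegrable ht 0 (2 * π)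
  have i3 := (h.smooth_dens (-1)).smooth_pth.intervalIntegrable ht 0 (2 * π)
  have i4 := h.smooth_enDen.intervalIntegrable ht 0 (2 * π)
  have e : ∫ θ in (0 : ℝ)..(2 * π), pt (enDen Q lam β η U A φ σ) t θ =
      ∫ θ in (0 : ℝ)..(2 * π), (pt (enDen Q lam β η U A φ σ) t θ - 1 / 2 *
        (pth (dens lam 1 β U A φ σ) t θ - pth (dens lam (-1) β U A φ σ) t θ)) := by
    rw [intervalIntegral.integral_sub i1 ((i2.sub i3).const_mul _),
      intervalIntegral.integral_const_mul, intervalIntegral.integral_sub i2 i3,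
      (h.smooth_dens 1).integral_pth (h.per_dens 1) ht,
      (h.smooth_dens (-1)).integral_pth (h.per_dens (-1)) ht]
    simp
  rw [e]
  constructor
  · rw [← intervalIntegral.integral_const_mul]
    exact intervalIntegral.integral_mono_on h2π (i4.const_mul _)
      (i1.sub ((i2.sub i3).const_mul _)) fun θ _ => (h.energy_balance_bounds ht θ).1
  · have := intervalIntegral.integral_mono_on h2π (i1.sub ((i2.sub i3).const_mul (1 / 2)))
      (intervalIntegrable_const (c := (0 : ℝ))) fun θ _ => (h.energy_balance_bounds ht θ).2
    simpa using this

lemma energy_bounds (h : BetaSys Q lam Tm Tp β η U A φ σ) {T : ℝ} (hT : T ∈ Ioo Tm Tp)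
    (ht : t ∈ Ioc Tm T) :
    (∫ θ in (0 : ℝ)..(2 * π), enDen Q lam β η U A φ σ T θ)
      ≤ ∫ θ in (0 : ℝ)..(2 * π), enDen Q lam β η U A φ σ t θ ∧
    Tm ^ 2 * (∫ θ in (0 : ℝ)..(2 * π), enDen Q lam β η U A φ σ t θ) ≤
      T ^ 2 * ∫ θ in (0 : ℝ)..(2 * π), enDen Q lam β η U A φ σ T θ := by
  have h2π : (0 : ℝ) ≤ 2 * π := by positivity
  have hsub : ∀ s ∈ Ioc Tm T, s ∈ Ioo Tm Tp := fun s hs => ⟨hs.1, hs.2.trans_lt hT.2⟩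
  have hE0 : 0 ≤ ∫ θ in (0 : ℝ)..(2 * π), enDen Q lam β η U A φ σ t θ :=
    intervalIntegral.integral_nonneg h2π fun θ _ => mul_nonneg (exp_pos _).le
      (add_nonneg (eDen_nonneg _ _ _ _ _ _ _ _) (div_nonneg (potV_nonneg _ _ _ _ _ _ _ _) (by norm_num)))
  constructor
  · have := past_le_of_deriv_nonneg
      (g := fun s => - ∫ θ in (0 : ℝ)..(2 * π), enDen Q lam β η U A φ σ s θ)
      (fun s hs => (h.smooth_enDen.hasDerivAt_integral (hsub s hs)).neg)
      (fun s hs => neg_nonneg.2 (h.energy_deriv (hsub s hs)).2) ht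
    linarith
  · have := past_le_of_deriv_nonneg
      (g := fun s => s ^ 2 * ∫ θ in (0 : ℝ)..(2 * π), enDen Q lam β η U A φ σ s θ)
      (fun s hs => ((hasDerivAt_pow 2 s).mul (h.smooth_enDen.hasDerivAt_integral (hsub s hs))))
      (fun s hs => by
        have hs0 := h.pos_of_mem (hsub s hs)
        have h1 := mul_le_mul_of_nonneg_left (h.energy_deriv (hsub s hs)).1 (sq_nonneg s)
        have e2 : s ^ 2 * (-(2 / s) * ∫ θ in (0 : ℝ)..(2 * π), enDen Q lam β η U A φ σ s θ)
            = - (2 * s * ∫ θ in (0 : ℝ)..(2 * π), enDen Q lam β η U A φ σ s θ) := by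
          field_simp
        rw [e2] at h1
        simp only [Nat.cast_ofNat, Nat.add_one_sub_one, pow_one]
        linarith) ht
    refine le_trans ?_ this
    have hTm := h.hTm
    have := ht.1.le
    gcongr

end BetaSys

/-! ### The upper bound on the potential -/

/-- The oscillation of a function on an interval is at most the integral of a bound on the
absolute value of its derivative. -/
lemma abs_sub_le_integral {f f' g : ℝ → ℝ} {a b x y : ℝ} (hd : ∀ z, HasDerivAt f (f' z) z)
    (hf' : Continuous f') (hg : Continuous g) (hle : ∀ z, |f' z| ≤ g z)
    (hx : x ∈ Icc a b) (hy : y ∈ Icc a b) : |f x - f y| ≤ ∫ z in a..b, g z := by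
  wlog hxy : y ≤ x generalizing x y
  · rw [abs_sub_comm]
    exact this hy hx (le_of_not_ge hxy)
  rw [← intervalIntegral.integral_eq_sub_of_hasDerivAt (fun z _ => hd z)
    (hf'.intervalIntegrable _ _), ← Real.norm_eq_abs]
  refine (intervalIntegral.norm_integral_le_of_norm_le hxy
    (Eventually.of_forall fun z _ => hle z) (hg.intervalIntegrable _ _)).trans ?_
  exact intervalIntegral.integral_mono_interval hy.1 hxy hx.2
    (Eventually.of_forall fun z => (abs_nonneg _).trans (hle z)) (hg.intervalIntegrable _ _)

/-- The elementary interpolation `e^w ≤ e^{4w/3} / k + k³`. -/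
lemma exp_le_interp (w : ℝ) {k : ℝ} (hk : 0 < k) : exp w ≤ exp (4 / 3 * w) / k + k ^ 3 := by
  have h3 : exp w = exp (w / 3) ^ 3 := by rw [← exp_nat_mul]; congr 1; push_cast; ring
  have h4 : exp (4 / 3 * w) = exp (w / 3) ^ 4 := by rw [← exp_nat_mul]; congr 1; push_cast; ring
  rw [h3, h4]
  have hx := exp_pos (w / 3)
  generalize exp (w / 3) = x at *
  rcases le_total x k with h | h
  · have := pow_le_pow_left₀ hx.le h 3
    have h0 : 0 ≤ x ^ 4 / k := by positivity
    linarith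
  · have : x ^ 3 ≤ x ^ 4 / k := by
      rw [le_div_iff₀ hk]
      have := mul_le_mul_of_nonneg_left h (pow_pos hx 3).le
      calc x ^ 3 * k ≤ x ^ 3 * x := this
        _ = x ^ 4 := by ring
    have h0 : 0 ≤ k ^ 3 := by positivity
    linarith

namespace BetaSys

variable {Q lam Tm Tp : ℝ} {β η U A φ σ : ℝ → ℝ → ℝ} {t T : ℝ}

lemma mem_of_mem_Ioc (hT : T ∈ Ioo Tm Tp) (ht : t ∈ Ioc Tm T) : t ∈ Ioo Tm Tp :=
  ⟨ht.1, ht.2.trans_lt hT.2⟩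

/-- The timelike convergence condition makes `w - (3/4) β` almost nondecreasing in time: the
kinetic energy of `(φ, σ)` compensates what remains of the potential. -/
lemma w_sub_beta_le (h : BetaSys Q lam Tm Tp β η U A φ σ) (hT : T ∈ Ioo Tm Tp)
    (tcc : ∀ t ∈ Ioo Tm Tp, ∀ θ, potV Q lam β η U φ t θ / 2 ≤
      pt φ t θ ^ 2 + exp (2 * lam * φ t θ) * pt σ t θ ^ 2) :
    ∃ C, ∀ t ∈ Ioc Tm T, ∀ θ, wFun lam β η U φ t θ - 3 / 4 * β t θ ≤ C := by
  have hs := h.smooth_w.sub (h.sβ.const_mul (3 / 4))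
  have hp : PerSlab Tm Tp (fun t θ => wFun lam β η U φ t θ - 3 / 4 * β t θ) := by
    intro t ht θ
    simp only [h.per_w t ht, h.pβ t ht]
  obtain ⟨B, -, hB⟩ := hs.bounded_slice hp hT
  have hTm := h.hTm
  refine ⟨B + (1 / 2 + 4 * lam ^ 2) / Tm * (T - Tm), fun t ht θ => ?_⟩
  have := past_le_of_deriv_ge (C := (1 / 2 + 4 * lam ^ 2) / Tm) (by positivity)
    (fun s hs' => hs.hasDerivAt_t (mem_of_mem_Ioc hT hs') θ) (fun s hs' => ?_) ht
  · have h2 := (abs_le.1 (hB θ)).2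
    linarith
  · have hm := mem_of_mem_Ioc hT hs'
    have e : pt (fun t θ => wFun lam β η U φ t θ - 3 / 4 * β t θ) s θ = _ :=
      ((h.smooth_w.hasDerivAt_t hm θ).sub ((h.sβ.hasDerivAt_t hm θ).const_mul (3 / 4))).deriv
    rw [e, h.pt_w hm, h.beta_t s hm]
    have hs0 := h.pos_of_mem hm
    have h1 := tcc s hm θ
    have h2 := eDen_ge lam β U A φ σ s θ
    have h3 : 0 ≤ exp (2 * lam * φ s θ) * pt σ s θ ^ 2 := by positivity
    generalize exp (2 * lam * φ s θ) * pt σ s θ ^ 2 = X at *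
    generalize pt φ s θ = p at *
    generalize pt U s θ = u at *
    generalize eDen lam β U A φ σ s θ = E at *
    generalize potV Q lam β η U φ s θ = V at *
    have hC : 1 / 2 + 4 * lam ^ 2 ≤ s * ((1 / 2 + 4 * lam ^ 2) / Tm) := by
      rw [← mul_div_assoc, le_div_iff₀ hTm, mul_comm s]
      exact mul_le_mul_of_nonneg_left hs'.1.le (by positivity)
    generalize (1 / 2 + 4 * lam ^ 2) / Tm = C at *
    have h4 : 2 * s * u ^ 2 - 2 * u + 1 / 4 * s * p ^ 2 + 2 * lam * p ≤
        2 * s * E - s * V / 2 + 2 * lam * p - 2 * u - 3 / 4 * (-(1 / 2) * s * V) := by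
      have h5 : 0 ≤ s * (2 * E - V / 8 - 2 * u ^ 2 - 1 / 4 * p ^ 2) :=
        mul_nonneg hs0.le (by linarith)
      nlinarith
    refine le_trans ?_ h4
    have h6 : 0 ≤ s * (2 * s * u ^ 2 - 2 * u + 1 / 4 * s * p ^ 2 + 2 * lam * p + C) := by
      nlinarith [sq_nonneg (s * u - 1 / 2), sq_nonneg (1 / 2 * s * p + 2 * lam)]
    have := nonneg_of_mul_nonneg_right h6 hs0
    linarith

lemma pt_w_ge (h : BetaSys Q lam Tm Tp β η U A φ σ) (ht : t ∈ Ioo Tm Tp) (θ : ℝ) :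
    t * eDen lam β U A φ σ t θ - t * potV Q lam β η U φ t θ / 2 - (1 + 4 * lam ^ 2) / Tm
      ≤ pt (wFun lam β η U φ) t θ := by
  rw [h.pt_w ht]
  have hTm := h.hTm
  have ht0 := h.pos_of_mem ht
  have h2 := eDen_ge lam β U A φ σ t θ
  have h3 : 0 ≤ exp (2 * lam * φ t θ) * pt σ t θ ^ 2 := by positivity
  have hC : 1 + 4 * lam ^ 2 ≤ t * ((1 + 4 * lam ^ 2) / Tm) := by
    rw [← mul_div_assoc, le_div_iff₀ hTm, mul_comm t]
    exact mul_le_mul_of_nonneg_left ht.1.le (by positivity)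
  generalize exp (2 * lam * φ t θ) * pt σ t θ ^ 2 = X at *
  generalize pt φ t θ = p at *
  generalize pt U t θ = u at *
  generalize eDen lam β U A φ σ t θ = E at *
  generalize (1 + 4 * lam ^ 2) / Tm = C at *
  have h6 : 0 ≤ t * (t * u ^ 2 - 2 * u + 1 / 4 * t * p ^ 2 + 2 * lam * p + C) := by
    nlinarith [sq_nonneg (t * u - 1), sq_nonneg (1 / 2 * t * p + 2 * lam)]
  have h7 := nonneg_of_mul_nonneg_right h6 ht0
  have h8 : t * (u ^ 2 + 1 / 4 * p ^ 2) ≤ t * E := mul_le_mul_of_nonneg_left (by linarith) ht0.le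
  linarith

lemma exp_neg_mul_exp (x : ℝ) : exp (-x) * exp x = 1 := by rw [← exp_add]; simp

/-- The angular derivative of `w` is controlled by the energy density. -/
lemma abs_pth_w_le (h : BetaSys Q lam Tm Tp β η U A φ σ) (hT : T ∈ Ioo Tm Tp) (ht : t ∈ Ioc Tm T)
    (θ : ℝ) : |pth (wFun lam β η U φ) t θ| ≤
      (2 * T + 2 + 2 * |lam|) * (enDen Q lam β η U A φ σ t θ + exp (- β t θ)) := by
  have hm := mem_of_mem_Ioc hT ht
  have ht0 := h.pos_of_mem hm
  have hV := potV_nonneg Q lam β η U φ t θ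
  have hD1 := dens_nonneg lam 1 β U A φ σ t θ
  have hD2 := dens_nonneg lam (-1) β U A φ σ t θ
  have he := eDen_ge_space lam β U A φ σ t θ
  have he0 := eDen_nonneg lam β U A φ σ t θ
  have hns := exp_neg_mul_exp (β t θ)
  have hn := exp_pos (- β t θ)
  have eU : pth U t θ = exp (- β t θ) * (exp (β t θ) * pth U t θ) := by
    rw [← mul_assoc, hns, one_mul]
  have eφ : pth φ t θ = exp (- β t θ) * (exp (β t θ) * pth φ t θ) := by
    rw [← mul_assoc, hns, one_mul]
  rw [h.pth_w hm, h.eta_θ t hm, eU, eφ]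
  have hd : |(dens lam 1 β U A φ σ t θ - dens lam (-1) β U A φ σ t θ) / 2|
      ≤ eDen lam β U A φ σ t θ := by
    rw [eDen, abs_le]
    constructor <;> linarith
  generalize (dens lam 1 β U A φ σ t θ - dens lam (-1) β U A φ σ t θ) / 2 = d at *
  generalize exp (β t θ) * pth U t θ = u at *
  generalize exp (β t θ) * pth φ t θ = p at *
  unfold enDen
  generalize exp (- β t θ) = n at *
  generalize eDen lam β U A φ σ t θ = E at *
  generalize potV Q lam β η U φ t θ = V at *
  have hu : |u| ≤ 1 + E := by
    have := sq_abs u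
    nlinarith [sq_nonneg (|u| - 1), sq_nonneg p]
  have hp : |p| ≤ 1 + E := by
    have := sq_abs p
    nlinarith [sq_nonneg (|p| - 2), sq_nonneg u]
  have h1 : |2 * (t * n * d) + 2 * lam * (n * p) - 2 * (n * u)|
      ≤ n * (2 * t * |d| + 2 * |lam| * |p| + 2 * |u|) := by
    have e : 2 * (t * n * d) + 2 * lam * (n * p) - 2 * (n * u)
      = n * (2 * t * d + 2 * lam * p - 2 * u) := by ring
    rw [e, abs_mul, abs_of_pos hn]
    refine mul_le_mul_of_nonneg_left ?_ hn.le
    refine (abs_sub _ _).trans (add_le_add ((abs_add_le _ _).trans (add_le_add ?_ ?_)) ?_)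
    · rw [abs_mul, abs_of_pos (by positivity : 0 < 2 * t)]
    · rw [abs_mul, abs_mul, abs_two]
    · rw [abs_mul, abs_two]
  refine h1.trans ?_
  have hl := abs_nonneg lam
  have h2 : 2 * t * |d| + 2 * |lam| * |p| + 2 * |u|
      ≤ 2 * T * (E + 1) + 2 * |lam| * (1 + E) + 2 * (1 + E) := by
    have : 2 * t * |d| ≤ 2 * T * (E + 1) :=
      mul_le_mul (by linarith [ht.2]) (by linarith) (abs_nonneg _) (by linarith [ht.2])
    gcongr
  have h3 : E + 1 ≤ E + V / 4 + 1 := by linarith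
  calc n * (2 * t * |d| + 2 * |lam| * |p| + 2 * |u|)
      ≤ n * (2 * T * (E + 1) + 2 * |lam| * (1 + E) + 2 * (1 + E)) :=
        mul_le_mul_of_nonneg_left h2 hn.le
    _ = (2 * T + 2 + 2 * |lam|) * n * (E + 1) := by ring
    _ ≤ (2 * T + 2 + 2 * |lam|) * n * (E + V / 4 + 1) :=
        mul_le_mul_of_nonneg_left h3 (mul_nonneg (by linarith [ht.2]) hn.le)
    _ = _ := by ring

/-- The weight `L = ∫ e^{-β}` is nondecreasing in time. -/
lemma length_le (h : BetaSys Q lam Tm Tp β η U A φ σ) (hT : T ∈ Ioo Tm Tp) (ht : t ∈ Ioc Tm T) :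
    (∫ θ in (0 : ℝ)..(2 * π), exp (- β t θ)) ≤ ∫ θ in (0 : ℝ)..(2 * π), exp (- β T θ) := by
  refine past_le_of_deriv_nonneg (g := fun s => ∫ θ in (0 : ℝ)..(2 * π), exp (- β s θ))
    (fun s hs => h.smooth_n.hasDerivAt_integral (mem_of_mem_Ioc hT hs)) (fun s hs => ?_) ht
  refine intervalIntegral.integral_nonneg (by positivity) fun θ _ => ?_
  have hm := mem_of_mem_Ioc hT hs
  have hs0 := h.pos_of_mem hm
  have := potV_nonneg Q lam β η U φ s θ
  rw [h.pt_n hm]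
  positivity

lemma length_pos (h : BetaSys Q lam Tm Tp β η U A φ σ) (ht : t ∈ Ioo Tm Tp) :
    0 < ∫ θ in (0 : ℝ)..(2 * π), exp (- β t θ) :=
  intervalIntegral.intervalIntegral_pos_of_pos (h.smooth_n.intervalIntegrable ht _ _)
    (fun _ => exp_pos _) (by positivity)

lemma energy_pos (h : BetaSys Q lam Tm Tp β η U A φ σ) (hQ : Q ≠ 0) (ht : t ∈ Ioo Tm Tp) :
    0 < ∫ θ in (0 : ℝ)..(2 * π), enDen Q lam β η U A φ σ t θ := by
  refine intervalIntegral.intervalIntegral_pos_of_pos (h.smooth_enDen.intervalIntegrable ht _ _)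
    (fun θ => mul_pos (exp_pos _) ?_) (by positivity)
  have h1 := potV_pos hQ lam β η U φ t θ
  have h2 := eDen_nonneg lam β U A φ σ t θ
  linarith

/-- The oscillation of `w` over a time slice is bounded. -/
lemma osc_w (h : BetaSys Q lam Tm Tp β η U A φ σ) (hT : T ∈ Ioo Tm Tp) :
    ∃ O, 0 ≤ O ∧ ∀ t ∈ Ioc Tm T, ∀ x ∈ Icc (0 : ℝ) (2 * π), ∀ y ∈ Icc (0 : ℝ) (2 * π),
      |wFun lam β η U φ t x - wFun lam β η U φ t y| ≤ O := by
  have hTm := h.hTm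
  have hT0 := h.pos_of_mem hT
  set ET := ∫ θ in (0 : ℝ)..(2 * π), enDen Q lam β η U A φ σ T θ with hET
  set LT := ∫ θ in (0 : ℝ)..(2 * π), exp (- β T θ) with hLT
  have hbd : ∀ t ∈ Ioc Tm T, ∀ x ∈ Icc (0 : ℝ) (2 * π), ∀ y ∈ Icc (0 : ℝ) (2 * π),
      |wFun lam β η U φ t x - wFun lam β η U φ t y|
        ≤ (2 * T + 2 + 2 * |lam|) * (T ^ 2 * ET / Tm ^ 2 + LT) := by
    intro t ht x hx y hy
    have hm := mem_of_mem_Ioc hT ht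
    have i1 := h.smooth_enDen.intervalIntegrable hm 0 (2 * π)
    have i2 := h.smooth_n.intervalIntegrable hm 0 (2 * π)
    refine (abs_sub_le_integral (h.smooth_w.hasDerivAt_θ hm) (h.smooth_w.smooth_pth.continuous_θ hm)
      (continuous_const.mul ((h.smooth_enDen.continuous_θ hm).add (h.smooth_n.continuous_θ hm)))
      (h.abs_pth_w_le hT ht) hx hy).trans ?_
    simp only [Pi.mul_apply, Pi.add_apply]
    rw [intervalIntegral.integral_const_mul, intervalIntegral.integral_add i1 i2]
    have hE := (h.energy_bounds hT ht).2
    have hL := h.length_le hT ht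
    have hE' : ∫ θ in (0 : ℝ)..(2 * π), enDen Q lam β η U A φ σ t θ ≤ T ^ 2 * ET / Tm ^ 2 := by
      rw [le_div_iff₀ (by positivity)]
      linarith
    gcongr
  exact ⟨_, (abs_nonneg _).trans (hbd T ⟨hT.1, le_rfl⟩ 0 ⟨le_rfl, by positivity⟩ 0
    ⟨le_rfl, by positivity⟩), hbd⟩

end BetaSys

namespace BetaSys

variable {Q lam Tm Tp : ℝ} {β η U A φ σ : ℝ → ℝ → ℝ} {t T : ℝ}

lemma smooth_nw (h : BetaSys Q lam Tm Tp β η U A φ σ) :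
    SmoothSlab Tm Tp (fun t θ => exp (- β t θ) * wFun lam β η U φ t θ) :=
  h.smooth_n.mul h.smooth_w

lemma pt_nw (h : BetaSys Q lam Tm Tp β η U A φ σ) (ht : t ∈ Ioo Tm Tp) (θ : ℝ) :
    pt (fun t θ => exp (- β t θ) * wFun lam β η U φ t θ) t θ =
      exp (- β t θ) * (pt (wFun lam β η U φ) t θ
        + t * potV Q lam β η U φ t θ / 2 * wFun lam β η U φ t θ) := by
  have e : pt (fun t θ => exp (- β t θ) * wFun lam β η U φ t θ) t θ = _ :=
    ((h.smooth_n.hasDerivAt_t ht θ).mul (h.smooth_w.hasDerivAt_t ht θ)).deriv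
  rw [e, h.pt_n ht]
  ring

/-- The mean of `w` over a time slice, with respect to the weight `e^{-β}`. -/
def meanW (lam : ℝ) (β η U φ : ℝ → ℝ → ℝ) (t : ℝ) : ℝ :=
  (∫ θ in (0 : ℝ)..(2 * π), exp (- β t θ) * wFun lam β η U φ t θ)
    / ∫ θ in (0 : ℝ)..(2 * π), exp (- β t θ)

lemma abs_w_sub_meanW_le (h : BetaSys Q lam Tm Tp β η U A φ σ) (ht : t ∈ Ioo Tm Tp) {O : ℝ}
    (hO : ∀ x ∈ Icc (0 : ℝ) (2 * π), ∀ y ∈ Icc (0 : ℝ) (2 * π),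
      |wFun lam β η U φ t x - wFun lam β η U φ t y| ≤ O) {x : ℝ} (hx : x ∈ Icc (0 : ℝ) (2 * π)) :
    |wFun lam β η U φ t x - meanW lam β η U φ t| ≤ O := by
  have hL := h.length_pos ht
  have h2π : (0 : ℝ) ≤ 2 * π := by positivity
  have i1 := h.smooth_nw.intervalIntegrable ht 0 (2 * π)
  have i2 := h.smooth_n.intervalIntegrable ht 0 (2 * π)
  have u1 : meanW lam β η U φ t ≤ wFun lam β η U φ t x + O := by
    rw [meanW, div_le_iff₀ hL, ← intervalIntegral.integral_const_mul]
    refine intervalIntegral.integral_mono_on h2π i1 (i2.const_mul _) fun y hy => ?_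
    rw [mul_comm]
    have := (abs_le.1 (hO x hx y hy)).1
    exact mul_le_mul_of_nonneg_right (by linarith) (exp_pos _).le
  have u2 : wFun lam β η U φ t x - O ≤ meanW lam β η U φ t := by
    rw [meanW, le_div_iff₀ hL, ← intervalIntegral.integral_const_mul]
    refine intervalIntegral.integral_mono_on h2π (i2.const_mul _) i1 fun y hy => ?_
    rw [mul_comm (exp _)]
    have := (abs_le.1 (hO x hx y hy)).2
    exact mul_le_mul_of_nonneg_right (by linarith) (exp_pos _).le
  exact abs_le.2 ⟨by linarith, by linarith⟩

lemma hasDerivAt_meanW (h : BetaSys Q lam Tm Tp β η U A φ σ) (ht : t ∈ Ioo Tm Tp) :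
    HasDerivAt (meanW lam β η U φ)
      ((∫ θ in (0 : ℝ)..(2 * π), exp (- β t θ) * (pt (wFun lam β η U φ) t θ
        + t * potV Q lam β η U φ t θ / 2 * (wFun lam β η U φ t θ - meanW lam β η U φ t)))
        / ∫ θ in (0 : ℝ)..(2 * π), exp (- β t θ)) t := by
  have hL := h.length_pos ht
  have i1 := h.smooth_nw.smooth_pt.intervalIntegrable ht 0 (2 * π)
  have i2 := h.smooth_n.smooth_pt.intervalIntegrable ht 0 (2 * π)
  have hd := (h.smooth_nw.hasDerivAt_integral ht).div (h.smooth_n.hasDerivAt_integral ht) hL.ne'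
  refine HasDerivAt.congr_deriv hd ?_
  have e : (∫ θ in (0 : ℝ)..(2 * π), exp (- β t θ) * (pt (wFun lam β η U φ) t θ
        + t * potV Q lam β η U φ t θ / 2 * (wFun lam β η U φ t θ - meanW lam β η U φ t))) =
      (∫ θ in (0 : ℝ)..(2 * π), pt (fun t θ => exp (- β t θ) * wFun lam β η U φ t θ) t θ)
      - meanW lam β η U φ t * ∫ θ in (0 : ℝ)..(2 * π), pt (fun t θ => exp (- β t θ)) t θ := by
    rw [← intervalIntegral.integral_const_mul, ← intervalIntegral.integral_sub i1 (i2.const_mul _)]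
    refine intervalIntegral.integral_congr fun θ _ => ?_
    rw [h.pt_nw ht, h.pt_n ht]
    ring
  rw [e, meanW]
  field_simp

/-- The exponent `w` is bounded above. The oscillation of `w` is bounded, so it suffices to
bound its weighted mean; there the energy, which is bounded below by its value at the final time,
absorbs the potential terms. -/
lemma w_le (h : BetaSys Q lam Tm Tp β η U A φ σ) (hT : T ∈ Ioo Tm Tp) (hQ : Q ≠ 0)
    (tcc : ∀ t ∈ Ioo Tm Tp, ∀ θ, potV Q lam β η U φ t θ / 2 ≤
      pt φ t θ ^ 2 + exp (2 * lam * φ t θ) * pt σ t θ ^ 2) :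
    ∃ C, ∀ t ∈ Ioc Tm T, ∀ θ, wFun lam β η U φ t θ ≤ C := by
  obtain ⟨C1, hC1⟩ := h.w_sub_beta_le hT tcc
  obtain ⟨O, hO0, hO⟩ := h.osc_w hT
  have hTm := h.hTm
  have hT0 := h.pos_of_mem hT
  have hET := h.energy_pos hQ hT
  set ET := ∫ θ in (0 : ℝ)..(2 * π), enDen Q lam β η U A φ σ T θ with hETdef
  set C2 := (1 + 4 * lam ^ 2) / Tm with hC2
  have hC20 : 0 ≤ C2 := by positivity
  set P := T * (3 / 4 + O / 2) * Q ^ 2 with hP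
  have hP0 : 0 ≤ P := by positivity
  set K1 := exp (4 / 3 * C1) with hK1
  have hK10 : 0 < K1 := exp_pos _
  -- `k` is chosen so that the `e^{4w/3}` part of the potential is absorbed by `Tm * E(T)`
  set k := 2 * π * P * K1 / (Tm * ET) + 1 with hk
  have hk0 : 0 < k := by positivity
  have hkE : 2 * π * (P * (K1 / k)) ≤ Tm * ET := by
    have h1 : 2 * π * P * K1 ≤ Tm * ET * k := by
      rw [hk, mul_add, mul_div_cancel₀ _ (by positivity)]
      nlinarith [mul_pos hTm hET]
    have e : 2 * π * (P * (K1 / k)) = 2 * π * P * K1 / k := by ring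
    rw [e, div_le_iff₀ hk0]
    exact h1
  have h2π : (0 : ℝ) ≤ 2 * π := by positivity
  have key : ∀ s ∈ Ioc Tm T, -(P * k ^ 3 + C2) ≤
      (∫ θ in (0 : ℝ)..(2 * π), exp (- β s θ) * (pt (wFun lam β η U φ) s θ
        + s * potV Q lam β η U φ s θ / 2 * (wFun lam β η U φ s θ - meanW lam β η U φ s)))
        / ∫ θ in (0 : ℝ)..(2 * π), exp (- β s θ) := by
    intro s hs
    have hm := mem_of_mem_Ioc hT hs
    have hs0 := h.pos_of_mem hm
    have hL := h.length_pos hm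
    have hE := (h.energy_bounds hT hs).1
    have i1 := h.smooth_enDen.intervalIntegrable hm 0 (2 * π)
    have i2 := h.smooth_n.intervalIntegrable hm 0 (2 * π)
    have i3 := (h.smooth_n.mul (h.smooth_w.smooth_pt.add ((((SmoothSlab.time.const_mul (1 / 2)).mul
      h.smooth_V)).mul (h.smooth_w.sub
        (SmoothSlab.const (meanW lam β η U φ s)))))).intervalIntegrable hm 0 (2 * π)
    have i3' : IntervalIntegrable (fun θ => exp (- β s θ) * (pt (wFun lam β η U φ) s θ
        + s * potV Q lam β η U φ s θ / 2 * (wFun lam β η U φ s θ - meanW lam β η U φ s)))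
        volume 0 (2 * π) := by
      refine i3.congr (fun θ _ => ?_)
      ring
    rw [le_div_iff₀ hL]
    have hmono := intervalIntegral.integral_mono_on h2π
      (((i1.const_mul Tm).sub (intervalIntegrable_const (c := P * (K1 / k)))).sub
        (i2.const_mul (P * k ^ 3 + C2))) i3' (fun θ hθ => ?_)
    · rw [intervalIntegral.integral_sub ((i1.const_mul Tm).sub intervalIntegrable_const)
        (i2.const_mul _), intervalIntegral.integral_sub (i1.const_mul Tm) intervalIntegrable_const,
        intervalIntegral.integral_const, intervalIntegral.integral_const_mul,
        intervalIntegral.integral_const_mul, sub_zero, smul_eq_mul] at hmono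
      refine le_trans ?_ hmono
      have := mul_le_mul_of_nonneg_left hE hTm.le
      linarith
    · have hw := h.pt_w_ge hm θ
      have hmw := (abs_le.1 (h.abs_w_sub_meanW_le hm (hO s hs) hθ)).1
      have hn := exp_pos (- β s θ)
      have hV := potV_nonneg Q lam β η U φ s θ
      have he0 := eDen_nonneg lam β U A φ σ s θ
      have hVn : exp (- β s θ) * potV Q lam β η U φ s θ
          ≤ Q ^ 2 * (K1 / k + k ^ 3 * exp (- β s θ)) := by
        have h1 := exp_le_interp (wFun lam β η U φ s θ) hk0
        have h2 : exp (- β s θ) * exp (4 / 3 * wFun lam β η U φ s θ) ≤ K1 := by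
          rw [← exp_add, hK1]
          refine exp_le_exp.2 ?_
          have := hC1 s hs θ
          linarith
        calc exp (- β s θ) * potV Q lam β η U φ s θ
            = Q ^ 2 * (exp (- β s θ) * exp (wFun lam β η U φ s θ)) := by rw [potV]; ring
          _ ≤ Q ^ 2 * (exp (- β s θ)
              * (exp (4 / 3 * wFun lam β η U φ s θ) / k + k ^ 3)) := by gcongr
          _ = Q ^ 2 * (exp (- β s θ) * exp (4 / 3 * wFun lam β η U φ s θ) / k
              + k ^ 3 * exp (- β s θ)) := by ring
          _ ≤ Q ^ 2 * (K1 / k + k ^ 3 * exp (- β s θ)) := by gcongr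
      rw [enDen]
      generalize pt (wFun lam β η U φ) s θ = W' at *
      generalize wFun lam β η U φ s θ - meanW lam β η U φ s = X at *
      generalize exp (- β s θ) = n at *
      generalize potV Q lam β η U φ s θ = V at *
      generalize eDen lam β U A φ σ s θ = E at *
      have j1 : s * V / 2 * (-O) ≤ s * V / 2 * X :=
        mul_le_mul_of_nonneg_left hmw (by positivity)
      have j2 : n * (s * E - s * V / 2 - C2 + s * V / 2 * (-O)) ≤ n * (W' + s * V / 2 * X) :=
        mul_le_mul_of_nonneg_left (by linarith) hn.le
      refine le_trans ?_ j2
      have j3 : Tm * (n * (E + V / 4)) ≤ s * (n * (E + V / 4)) :=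
        mul_le_mul_of_nonneg_right hs.1.le (by positivity)
      have j4 : s * ((3 / 4 + O / 2) * (n * V)) ≤ T * ((3 / 4 + O / 2) * (n * V)) :=
        mul_le_mul_of_nonneg_right hs.2 (by positivity)
      have j5 : T * (3 / 4 + O / 2) * (n * V)
          ≤ T * (3 / 4 + O / 2) * (Q ^ 2 * (K1 / k + k ^ 3 * n)) :=
        mul_le_mul_of_nonneg_left hVn (by positivity)
      have j6 : T * (3 / 4 + O / 2) * (Q ^ 2 * (K1 / k + k ^ 3 * n))
          = P * (K1 / k) + P * k ^ 3 * n := by rw [hP]; ring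
      linarith
  refine ⟨meanW lam β η U φ T + (P * k ^ 3 + C2) * (T - Tm) + O, fun t ht θ => ?_⟩
  have hm := mem_of_mem_Ioc hT ht
  obtain ⟨θ', hθ', e⟩ := h.per_w.exists_mem hm θ
  rw [e]
  have h1 := (abs_le.1 (h.abs_w_sub_meanW_le hm (hO t ht) hθ')).2
  have h2 := past_le_of_deriv_ge (C := P * k ^ 3 + C2) (by positivity)
    (fun s hs => h.hasDerivAt_meanW (mem_of_mem_Ioc hT hs)) key ht
  linarith

end BetaSys

/-! ### Bounds on the first derivatives -/

namespace BetaSys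

variable {Q lam Tm Tp : ℝ} {β η U A φ σ : ℝ → ℝ → ℝ} {t T : ℝ}

lemma transport_bound (h : BetaSys Q lam Tm Tp β η U A φ σ) {ε : ℝ} (hε : ε = 1 ∨ ε = -1)
    (ht : t ∈ Ioo Tm Tp) (θ : ℝ) {B C : ℝ} (hB : |pt β t θ| ≤ B)
    (hC : potV Q lam β η U φ t θ ≤ C) :
    |pt (dens lam ε β U A φ σ) t θ - ε * exp (β t θ) * pth (dens lam ε β U A φ σ) t θ| ≤
      (2 * B + 2 / Tm + C * (1 + |lam|)) *
        (1 + dens lam 1 β U A φ σ t θ + dens lam (-1) β U A φ σ t θ) := by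
  have hTm := h.hTm
  have ht0 := h.pos_of_mem ht
  have hV := potV_nonneg Q lam β η U φ t θ
  have hB0 : 0 ≤ B := (abs_nonneg _).trans hB
  have hC0 : 0 ≤ C := hV.trans hC
  have hl := abs_nonneg lam
  have hD1 := dens_nonneg lam 1 β U A φ σ t θ
  have hD2 := dens_nonneg lam (-1) β U A φ σ t θ
  have hD := dens_nonneg lam ε β U A φ σ t θ
  have hDle : dens lam ε β U A φ σ t θ ≤
      dens lam 1 β U A φ σ t θ + dens lam (-1) β U A φ σ t θ := by
    rcases hε with rfl | rfl <;> linarith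
  have hε2 : ε ^ 2 = 1 := by rcases hε with rfl | rfl <;> norm_num
  rw [h.transport hε ht]
  have he : pt U t θ ^ 2 + 1 / 4 * (pt φ t θ ^ 2 + exp (2 * lam * φ t θ) * pt σ t θ ^ 2)
      + exp (4 * U t θ) / (4 * t ^ 2) * (exp (β t θ) * pth A t θ) ^ 2
      ≤ eDen lam β U A φ σ t θ := by
    rw [eDen_eq]
    have h1 : 0 ≤ exp (4 * U t θ) / (4 * t ^ 2) * pt A t θ ^ 2 := by positivity
    have h2 : 0 ≤ exp (2 * lam * φ t θ) * (exp (β t θ) * pth σ t θ) ^ 2 := by positivity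
    nlinarith [sq_nonneg (exp (β t θ) * pth U t θ), sq_nonneg (exp (β t θ) * pth φ t θ)]
  have eD : (pt U t θ + ε * exp (β t θ) * pth U t θ) ^ 2
    + exp (4 * U t θ) / (4 * t ^ 2) * (pt A t θ + ε * exp (β t θ) * pth A t θ) ^ 2
    + 1 / 4 * ((pt φ t θ + ε * exp (β t θ) * pth φ t θ) ^ 2
      + exp (2 * lam * φ t θ) * (pt σ t θ + ε * exp (β t θ) * pth σ t θ) ^ 2)
    = dens lam ε β U A φ σ t θ := rfl
  have e1 : eDen lam β U A φ σ t θ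
    = (dens lam 1 β U A φ σ t θ + dens lam (-1) β U A φ σ t θ) / 2 := rfl
  have eA : (exp (β t θ) * pth A t θ) ^ 2 = (ε * exp (β t θ) * pth A t θ) ^ 2 := by
    rw [mul_assoc ε, mul_pow ε, hε2, one_mul]
  rw [eA, e1] at he
  have hc : 0 ≤ exp (4 * U t θ) / (4 * t ^ 2) := by positivity
  have hd : 0 ≤ exp (2 * lam * φ t θ) := (exp_pos _).le
  generalize dens lam 1 β U A φ σ t θ = D1 at *
  generalize dens lam (-1) β U A φ σ t θ = D2 at *
  generalize dens lam ε β U A φ σ t θ = D at *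
  generalize exp (4 * U t θ) / (4 * t ^ 2) = c at *
  generalize exp (2 * lam * φ t θ) = d at *
  generalize potV Q lam β η U φ t θ = V at *
  generalize pt β t θ = b at *
  generalize pt U t θ + ε * exp (β t θ) * pth U t θ = u at *
  generalize pt A t θ + ε * exp (β t θ) * pth A t θ = a at *
  generalize pt φ t θ + ε * exp (β t θ) * pth φ t θ = p at *
  generalize pt σ t θ + ε * exp (β t θ) * pth σ t θ = q at *
  generalize ε * exp (β t θ) * pth A t θ = a1 at *
  generalize pt U t θ = u0 at *
  generalize pt φ t θ = p0 at *
  generalize pt σ t θ = q0 at *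
  have hu : |u| ≤ 1 + D := by
    have : u ^ 2 ≤ D := by
      rw [← eD]
      have : 0 ≤ c * a ^ 2 + 1 / 4 * (p ^ 2 + d * q ^ 2) := by positivity
      linarith
    nlinarith [sq_abs u, sq_nonneg (|u| - 1)]
  have hp : |p| ≤ 1 + D := by
    have : 1 / 4 * p ^ 2 ≤ D := by
      rw [← eD]
      have : 0 ≤ u ^ 2 + c * a ^ 2 + 1 / 4 * (d * q ^ 2) := by positivity
      linarith
    nlinarith [sq_abs p, sq_nonneg (|p| - 2)]
  have hX : |u * u0 + 1 / 4 * (p * p0 + d * (q * q0)) + c * (a * a1)| ≤ D1 + D2 := by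
    have s1 : 0 ≤ c * (a - a1) ^ 2 := by positivity
    have s2 : 0 ≤ c * (a + a1) ^ 2 := by positivity
    have s3 : 0 ≤ d * (q - q0) ^ 2 := by positivity
    have s4 : 0 ≤ d * (q + q0) ^ 2 := by positivity
    rw [abs_le]
    constructor
    · nlinarith [sq_nonneg (u + u0), sq_nonneg (p + p0)]
    · nlinarith [sq_nonneg (u - u0), sq_nonneg (p - p0)]
  have k1 : |2 * b * D| ≤ 2 * B * (1 + D1 + D2) := by
    rw [abs_mul, abs_mul, abs_two, abs_of_nonneg hD]
    exact mul_le_mul (by linarith) (by linarith) hD (by positivity)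
  have k2 : |2 / t * (u * u0 + 1 / 4 * (p * p0 + d * (q * q0)) + c * (a * a1))|
      ≤ 2 / Tm * (1 + D1 + D2) := by
    rw [abs_mul, abs_of_pos (by positivity : 0 < 2 / t)]
    exact mul_le_mul (div_le_div_of_nonneg_left (by norm_num) hTm ht.1.le) (by linarith)
      (abs_nonneg _) (by positivity)
  have k3 : |V / 2 * (u - lam * p)| ≤ C * (1 + |lam|) * (1 + D1 + D2) := by
    rw [abs_mul, abs_of_nonneg (by positivity : 0 ≤ V / 2)]
    have : |u - lam * p| ≤ (1 + |lam|) * (1 + D1 + D2) := by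
      refine (abs_sub _ _).trans ?_
      rw [abs_mul]
      calc |u| + |lam| * |p| ≤ (1 + D) + |lam| * (1 + D) := by gcongr
        _ = (1 + |lam|) * (1 + D) := by ring
        _ ≤ (1 + |lam|) * (1 + D1 + D2) :=
          mul_le_mul_of_nonneg_left (by linarith) (by positivity)
    rw [mul_assoc]
    exact mul_le_mul (by linarith) this (abs_nonneg _) hC0
  calc _ ≤ |2 * b * D| + |2 / t * (u * u0 + 1 / 4 * (p * p0 + d * (q * q0)) + c * (a * a1))|
        + |V / 2 * (u - lam * p)| :=
        (abs_add_le _ _).trans (add_le_add (abs_sub _ _) le_rfl)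
    _ ≤ _ := by linarith

lemma bd_V (h : BetaSys Q lam Tm Tp β η U A φ σ) (hT : T ∈ Ioo Tm Tp) (hQ : Q ≠ 0)
    (tcc : ∀ t ∈ Ioo Tm Tp, ∀ θ, potV Q lam β η U φ t θ / 2 ≤
      pt φ t θ ^ 2 + exp (2 * lam * φ t θ) * pt σ t θ ^ 2) :
    BdPast Tm T (potV Q lam β η U φ) := by
  obtain ⟨C, hC⟩ := h.w_le hT hQ tcc
  refine ⟨Q ^ 2 * exp C, fun t ht θ => ?_⟩
  rw [abs_of_nonneg (potV_nonneg _ _ _ _ _ _ _ _), potV]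
  have := hC t ht θ
  gcongr

lemma bd_pt_beta (hT : T ∈ Ioo Tm Tp) (hV : BdPast Tm T (potV Q lam β η U φ))
    (h : BetaSys Q lam Tm Tp β η U A φ σ) : BdPast Tm T (pt β) :=
  (((BdPast.time h.hTm).const_mul (-(1 / 2))).mul hV).congr
    fun t ht θ => h.beta_t t (mem_of_mem_Ioc hT ht) θ

lemma bd_beta (hT : T ∈ Ioo Tm Tp) (hV : BdPast Tm T (potV Q lam β η U φ))
    (h : BetaSys Q lam Tm Tp β η U A φ σ) : BdPast Tm T β := BdPast.of_pt hT h.sβ h.pβ (bd_pt_beta hT hV h)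

lemma bd_n (hT : T ∈ Ioo Tm Tp) (hV : BdPast Tm T (potV Q lam β η U φ))
    (h : BetaSys Q lam Tm Tp β η U A φ σ) : BdPast Tm T (fun t θ => exp (- β t θ)) := (bd_beta hT hV h).neg.exp

lemma bd_dens (hT : T ∈ Ioo Tm Tp) (hV : BdPast Tm T (potV Q lam β η U φ))
    (h : BetaSys Q lam Tm Tp β η U A φ σ) : BdPast Tm T (dens lam 1 β U A φ σ) ∧ BdPast Tm T (dens lam (-1) β U A φ σ) := by
  obtain ⟨B, hB⟩ := bd_pt_beta hT hV h
  obtain ⟨C, hC⟩ := hV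
  have hTm := h.hTm
  have hTT : T ∈ Ioc Tm T := ⟨hT.1, le_rfl⟩
  have hB0 : 0 ≤ B := (abs_nonneg _).trans (hB T hTT 0)
  have hC0 : 0 ≤ C := (abs_nonneg _).trans (hC T hTT 0)
  refine bdPast_of_transport (K := 2 * B + 2 / Tm + C * (1 + |lam|)) (c := fun t θ => exp (β t θ))
    hT (by positivity) (h.smooth_dens 1) (h.smooth_dens (-1)) (h.per_dens 1) (h.per_dens (-1))
    (fun _ _ _ => dens_nonneg _ _ _ _ _ _ _ _ _) (fun _ _ _ => dens_nonneg _ _ _ _ _ _ _ _ _) ?_ ?_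
  · intro t ht θ
    have := h.transport_bound (Or.inl rfl) (mem_of_mem_Ioc hT ht) θ (hB t ht θ)
      ((le_abs_self _).trans (hC t ht θ))
    simpa only [one_mul] using this
  · intro t ht θ
    have := h.transport_bound (Or.inr rfl) (mem_of_mem_Ioc hT ht) θ (hB t ht θ)
      ((le_abs_self _).trans (hC t ht θ))
    rw [neg_one_mul] at this
    rwa [add_right_comm (1 : ℝ)] at this

lemma bd_eDen (hT : T ∈ Ioo Tm Tp) (hV : BdPast Tm T (potV Q lam β η U φ))
    (h : BetaSys Q lam Tm Tp β η U A φ σ) : BdPast Tm T (eDen lam β U A φ σ) :=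
  (((bd_dens hT hV h).1.add (bd_dens hT hV h).2).const_mul (1 / 2)).congr fun t _ θ => by
    rw [eDen]; ring

lemma bd_pt_U (hT : T ∈ Ioo Tm Tp) (hV : BdPast Tm T (potV Q lam β η U φ))
    (h : BetaSys Q lam Tm Tp β η U A φ σ) : BdPast Tm T (pt U) := by
  refine (bd_eDen hT hV h).of_sq_le fun t _ θ => ?_
  have h1 := eDen_ge lam β U A φ σ t θ
  have h2 : 0 ≤ 1 / 4 * (pt φ t θ ^ 2 + exp (2 * lam * φ t θ) * pt σ t θ ^ 2) := by positivity
  linarith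

lemma bd_pt_φ (hT : T ∈ Ioo Tm Tp) (hV : BdPast Tm T (potV Q lam β η U φ))
    (h : BetaSys Q lam Tm Tp β η U A φ σ) : BdPast Tm T (pt φ) := by
  refine ((bd_eDen hT hV h).const_mul 4).of_sq_le fun t _ θ => ?_
  have h1 := eDen_ge lam β U A φ σ t θ
  have h2 : 0 ≤ pt U t θ ^ 2 + 1 / 4 * (exp (2 * lam * φ t θ) * pt σ t θ ^ 2) := by positivity
  linarith

lemma bd_pth_U (hT : T ∈ Ioo Tm Tp) (hV : BdPast Tm T (potV Q lam β η U φ))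
    (h : BetaSys Q lam Tm Tp β η U A φ σ) : BdPast Tm T (pth U) := by
  have : BdPast Tm T (fun t θ => exp (β t θ) * pth U t θ) := by
    refine (bd_eDen hT hV h).of_sq_le fun t _ θ => ?_
    have h1 := eDen_ge_space lam β U A φ σ t θ
    have h2 : 0 ≤ 1 / 4 * (exp (β t θ) * pth φ t θ) ^ 2 := by positivity
    linarith
  refine ((bd_n hT hV h).mul this).congr fun t _ θ => ?_
  rw [← mul_assoc, exp_neg_mul_exp, one_mul]

lemma bd_pth_φ (hT : T ∈ Ioo Tm Tp) (hV : BdPast Tm T (potV Q lam β η U φ))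
    (h : BetaSys Q lam Tm Tp β η U A φ σ) : BdPast Tm T (pth φ) := by
  have : BdPast Tm T (fun t θ => exp (β t θ) * pth φ t θ) := by
    refine ((bd_eDen hT hV h).const_mul 4).of_sq_le fun t _ θ => ?_
    have h1 := eDen_ge_space lam β U A φ σ t θ
    have h2 : 0 ≤ (exp (β t θ) * pth U t θ) ^ 2 := by positivity
    linarith
  refine ((bd_n hT hV h).mul this).congr fun t _ θ => ?_
  rw [← mul_assoc, exp_neg_mul_exp, one_mul]

lemma bd_pt_eta (hT : T ∈ Ioo Tm Tp) (hV : BdPast Tm T (potV Q lam β η U φ))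
    (h : BetaSys Q lam Tm Tp β η U A φ σ) : BdPast Tm T (pt η) :=
  ((BdPast.time h.hTm).mul ((bd_eDen hT hV h).add (hV.const_mul (1 / 4)))).congr fun t ht θ => by
    rw [h.eta_t t (mem_of_mem_Ioc hT ht), eDen]; ring

lemma bd_eta (hT : T ∈ Ioo Tm Tp) (hV : BdPast Tm T (potV Q lam β η U φ))
    (h : BetaSys Q lam Tm Tp β η U A φ σ) : BdPast Tm T η := BdPast.of_pt hT h.sη h.pη (bd_pt_eta hT hV h)

lemma bd_gamma_θ (hT : T ∈ Ioo Tm Tp) (hV : BdPast Tm T (potV Q lam β η U φ))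
    (h : BetaSys Q lam Tm Tp β η U A φ σ) : BdPast Tm T (fun t θ => pth η t θ + pth β t θ) :=
  (((BdPast.time h.hTm).mul (bd_n hT hV h)).mul
    (((bd_dens hT hV h).1.sub (bd_dens hT hV h).2).const_mul (1 / 2))).congr fun t ht θ => by
      rw [h.eta_θ t (mem_of_mem_Ioc hT ht)]; ring

lemma bd_pt_w (hT : T ∈ Ioo Tm Tp) (hV : BdPast Tm T (potV Q lam β η U φ))
    (h : BetaSys Q lam Tm Tp β η U A φ σ) : BdPast Tm T (pt (wFun lam β η U φ)) :=
  (((((BdPast.time h.hTm).mul (bd_eDen hT hV h)).const_mul 2).sub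
    (((BdPast.time h.hTm).mul hV).const_mul (1 / 2))).add
    (((bd_pt_φ hT hV h).const_mul (2 * lam)).sub ((bd_pt_U hT hV h).const_mul 2))).congr
    fun t ht θ => by
      rw [h.pt_w (mem_of_mem_Ioc hT ht)]; ring

lemma bd_pth_w (hT : T ∈ Ioo Tm Tp) (hV : BdPast Tm T (potV Q lam β η U φ))
    (h : BetaSys Q lam Tm Tp β η U A φ σ) : BdPast Tm T (pth (wFun lam β η U φ)) :=
  (((bd_gamma_θ hT hV h).const_mul 2).add
    (((bd_pth_φ hT hV h).const_mul (2 * lam)).sub ((bd_pth_U hT hV h).const_mul 2))).congr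
    fun t ht θ => by
      rw [h.pth_w (mem_of_mem_Ioc hT ht)]; ring

/-- The angular derivative of `β̇ = -tV/2` involves no second derivatives, which makes `β'`
bounded. -/
lemma bd_pth_beta (hT : T ∈ Ioo Tm Tp) (hV : BdPast Tm T (potV Q lam β η U φ))
    (h : BetaSys Q lam Tm Tp β η U A φ σ) : BdPast Tm T (pth β) := by
  refine BdPast.of_pt hT h.sβ.smooth_pth h.pβ.pth ?_
  refine (((BdPast.time h.hTm).const_mul (-(1 / 2))).mul (hV.mul (bd_pth_w hT hV h))).congr
    fun t ht θ => ?_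
  have hm := mem_of_mem_Ioc hT ht
  rw [h.sβ.pt_pth hm, pth]
  have e : (fun x => pt β t x) = fun x => -(1 / 2) * t * potV Q lam β η U φ t x :=
    funext fun x => h.beta_t t hm x
  rw [e, ((h.smooth_V.hasDerivAt_θ hm θ).const_mul (-(1 / 2) * t)).deriv, h.pth_V hm]

lemma bd_pth_eta (hT : T ∈ Ioo Tm Tp) (hV : BdPast Tm T (potV Q lam β η U φ))
    (h : BetaSys Q lam Tm Tp β η U A φ σ) : BdPast Tm T (pth η) :=
  ((bd_gamma_θ hT hV h).sub (bd_pth_beta hT hV h)).congr fun t _ θ => by ring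

end BetaSys

/-! ### From `α` to `β` -/

namespace GowdySolution

variable {Q lam Tm Tp : ℝ} {t : ℝ}

/-- The function `β = (1/2) log α`. -/
def beta (G : GowdySolution Q lam Tm Tp) (t θ : ℝ) : ℝ := 1 / 2 * log (G.α t θ)

lemma smooth_alpha (G : GowdySolution Q lam Tm Tp) : SmoothSlab Tm Tp G.α := G.smooth G.α (by simp)

lemma exp_beta_sq (G : GowdySolution Q lam Tm Tp) (ht : t ∈ Ioo Tm Tp) (θ : ℝ) :
    exp (G.beta t θ) ^ 2 = G.α t θ := by
  rw [← exp_nat_mul, beta]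
  push_cast
  rw [← mul_assoc]
  norm_num
  exact exp_log (G.sys.alpha_pos t ht θ)

lemma smooth_beta (G : GowdySolution Q lam Tm Tp) : SmoothSlab Tm Tp G.beta := by
  have : SmoothSlab Tm Tp (fun t θ => log (G.α t θ)) :=
    ContDiffOn.log G.smooth_alpha fun p hp => (G.sys.alpha_pos p.1 hp.1 p.2).ne'
  exact this.const_mul (1 / 2)

lemma pt_alpha (G : GowdySolution Q lam Tm Tp) (ht : t ∈ Ioo Tm Tp) (θ : ℝ) :
    pt G.α t θ = 2 * pt G.beta t θ * G.α t θ := by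
  have hα := G.sys.alpha_pos t ht θ
  have e : pt G.beta t θ = _ :=
    (((G.smooth_alpha.hasDerivAt_t ht θ).log hα.ne').const_mul (1 / 2)).deriv
  rw [e]
  field_simp

lemma pth_alpha (G : GowdySolution Q lam Tm Tp) (ht : t ∈ Ioo Tm Tp) (θ : ℝ) :
    pth G.α t θ = 2 * pth G.beta t θ * G.α t θ := by
  have hα := G.sys.alpha_pos t ht θ
  have e : pth G.beta t θ = _ :=
    (((G.smooth_alpha.hasDerivAt_θ ht θ).log hα.ne').const_mul (1 / 2)).deriv
  rw [e]
  field_simp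

lemma potV_eq (G : GowdySolution Q lam Tm Tp) (ht : t ∈ Ioo Tm Tp) (θ : ℝ) :
    potV Q lam G.beta G.η G.U G.φ t θ =
      G.α t θ * Q ^ 2 * exp (2 * lam * G.φ t θ + 2 * (G.η t θ - G.U t θ)) := by
  rw [potV, ← G.exp_beta_sq ht, ← exp_nat_mul, mul_right_comm, ← exp_add, wFun, mul_comm]
  congr 2
  push_cast
  ring

lemma pt_alpha_eq (G : GowdySolution Q lam Tm Tp) (ht : t ∈ Ioo Tm Tp) (θ : ℝ) :
    pt G.α t θ = - (t * (potV Q lam G.beta G.η G.U G.φ t θ * G.α t θ)) := by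
  rw [G.sys.constraint_α t ht, G.potV_eq ht]
  ring

lemma betaSys (G : GowdySolution Q lam Tm Tp) (hTm : 0 < Tm) :
    BetaSys Q lam Tm Tp G.beta G.η G.U G.A G.φ G.σ where
  hTm := hTm
  sβ := G.smooth_beta
  sη := G.smooth G.η (by simp)
  sU := G.smooth G.U (by simp)
  sA := G.smooth G.A (by simp)
  sφ := G.smooth G.φ (by simp)
  sσ := G.smooth G.σ (by simp)
  pβ t _ θ := by simp only [beta, G.periodic G.α (by simp)]
  pη t _ θ := G.periodic G.η (by simp) t θ
  pU t _ θ := G.periodic G.U (by simp) t θ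
  pA t _ θ := G.periodic G.A (by simp) t θ
  pφ t _ θ := G.periodic G.φ (by simp) t θ
  pσ t _ θ := G.periodic G.σ (by simp) t θ
  beta_t t ht θ := by
    have hα := G.sys.alpha_pos t ht θ
    have h1 := G.pt_alpha ht θ
    rw [G.pt_alpha_eq ht] at h1
    have h2 : (pt G.beta t θ + 1 / 2 * t * potV Q lam G.beta G.η G.U G.φ t θ) * G.α t θ = 0 := by
      linarith
    rcases mul_eq_zero.1 h2 with h3 | h3
    · linarith
    · exact absurd h3 hα.ne'
  eta_t t ht θ := by
    have ht0 : t ≠ 0 := (hTm.trans ht.1).ne'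
    have h1 := G.sys.constraint_t t ht θ
    have h2 := eDen_eq lam G.beta G.U G.A G.φ G.σ t θ
    rw [eDen] at h2
    rw [h2, G.potV_eq ht]
    simp only [mul_pow, G.exp_beta_sq ht]
    rw [div_eq_iff ht0] at h1
    rw [h1]
    ring
  eta_θ t ht θ := by
    have ht0 : t ≠ 0 := (hTm.trans ht.1).ne'
    have hα := G.sys.alpha_pos t ht θ
    have h1 := G.sys.constraint_θ t ht θ
    rw [G.pth_alpha ht, div_eq_iff ht0] at h1
    have hns := BetaSys.exp_neg_mul_exp (G.beta t θ)
    rw [h1]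
    simp only [dens]
    generalize exp (-G.beta t θ) = n at *
    generalize exp (G.beta t θ) = s at *
    generalize exp (4 * G.U t θ) = c at *
    generalize exp (2 * lam * G.φ t θ) = d at *
    have e : 2 * pth G.beta t θ * G.α t θ / (2 * t * G.α t θ) = pth G.beta t θ / t := by
      field_simp
    rw [e]
    have e2 : pth G.beta t θ / t * t = pth G.beta t θ := by field_simp
    linear_combination (-1 : ℝ) * e2 - t * (2 * pt G.U t θ * pth G.U t θ
      + c / (2 * t ^ 2) * (pt G.A t θ * pth G.A t θ)
      + 1 / 2 * (pt G.φ t θ * pth G.φ t θ + d * (pt G.σ t θ * pth G.σ t θ))) * hns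
  U_tt t ht θ := by
    have hα := G.sys.alpha_pos t ht θ
    have h1 := G.sys.evol_U t ht θ
    rw [G.pth_alpha ht, G.pt_alpha ht] at h1
    have e : 2 * pt G.beta t θ * G.α t θ * pt G.U t θ / (2 * G.α t θ)
      = pt G.beta t θ * pt G.U t θ := by field_simp
    rw [e] at h1
    rw [G.potV_eq ht, G.exp_beta_sq ht]
    linear_combination h1
  A_tt t ht θ := by
    have hα := G.sys.alpha_pos t ht θ
    have h1 := G.sys.evol_A t ht θ
    rw [G.pth_alpha ht, G.pt_alpha ht] at h1
    have e : 2 * pt G.beta t θ * G.α t θ * pt G.A t θ / (2 * G.α t θ)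
      = pt G.beta t θ * pt G.A t θ := by field_simp
    rw [e] at h1
    rw [G.exp_beta_sq ht]
    linear_combination h1
  φ_tt t ht θ := by
    have hα := G.sys.alpha_pos t ht θ
    have h1 := G.sys.evol_φ t ht θ
    rw [G.pth_alpha ht, G.pt_alpha ht] at h1
    have e : 2 * pt G.beta t θ * G.α t θ * pt G.φ t θ / (2 * G.α t θ)
      = pt G.beta t θ * pt G.φ t θ := by field_simp
    rw [e] at h1
    rw [G.potV_eq ht, G.exp_beta_sq ht]
    linear_combination h1
  σ_tt t ht θ := by
    have hα := G.sys.alpha_pos t ht θ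
    have h1 := G.sys.evol_σ t ht θ
    rw [G.pth_alpha ht, G.pt_alpha ht] at h1
    have e : 2 * pt G.beta t θ * G.α t θ * pt G.σ t θ / (2 * G.α t θ)
      = pt G.beta t θ * pt G.σ t θ := by field_simp
    rw [e] at h1
    rw [G.exp_beta_sq ht]
    linear_combination h1

lemma pth_pt_alpha (G : GowdySolution Q lam Tm Tp) (hTm : 0 < Tm) (ht : t ∈ Ioo Tm Tp) (θ : ℝ) :
    pth (pt G.α) t θ = - (t * (potV Q lam G.beta G.η G.U G.φ t θ
      * pth (wFun lam G.beta G.η G.U G.φ) t θ * G.α t θ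
      + potV Q lam G.beta G.η G.U G.φ t θ * pth G.α t θ)) := by
  have h := G.betaSys hTm
  have e : (fun x => pt G.α t x)
      = fun x => - (t * (potV Q lam G.beta G.η G.U G.φ t x * G.α t x)) :=
    funext fun x => G.pt_alpha_eq ht x
  rw [pth, e, ← h.pth_V ht]
  exact (((h.smooth_V.hasDerivAt_θ ht θ).mul (G.smooth_alpha.hasDerivAt_θ ht θ)).const_mul t).neg.deriv

lemma pt_pt_alpha (G : GowdySolution Q lam Tm Tp) (hTm : 0 < Tm) (ht : t ∈ Ioo Tm Tp) (θ : ℝ) :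
    pt (pt G.α) t θ = - (1 * (potV Q lam G.beta G.η G.U G.φ t θ * G.α t θ)
      + t * (potV Q lam G.beta G.η G.U G.φ t θ
      * pt (wFun lam G.beta G.η G.U G.φ) t θ * G.α t θ
      + potV Q lam G.beta G.η G.U G.φ t θ * pt G.α t θ)) := by
  have h := G.betaSys hTm
  have e : (fun s => pt G.α s θ) =ᶠ[nhds t]
      fun s => - (s * (potV Q lam G.beta G.η G.U G.φ s θ * G.α s θ)) := by
    filter_upwards [isOpen_Ioo.mem_nhds ht] with s hs
    exact G.pt_alpha_eq hs θ
  rw [pt, e.deriv_eq, ← h.pt_V ht]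
  exact ((hasDerivAt_id t).mul
    ((h.smooth_V.hasDerivAt_t ht θ).mul (G.smooth_alpha.hasDerivAt_t ht θ))).neg.deriv

end GowdySolution

theorem alpha_eta_derivatives_bounded_past (Q lam Tm Tp t_i : ℝ) (hQ : Q ≠ 0) (hTm : 0 < Tm) (hti : Tm < t_i)
    (hTp : t_i < Tp) (G : GowdySolution Q lam Tm Tp)
    (lamBar : ℝ) (hlam : |lam| ≤ lamBar) (hlamBar : lamBar < 1 / 2)
    (htcc : TCC Q lam Tm Tp G.η G.α G.U G.φ G.σ) :
    ∃ C : ℝ, ∀ t ∈ Ioc Tm t_i, ∀ θ : ℝ,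
      |pth G.α t θ| ≤ C ∧ |pth (pt G.α) t θ| ≤ C ∧ |pt (pt G.α) t θ| ≤ C
      ∧ |G.η t θ| ≤ C ∧ |pt G.η t θ| ≤ C ∧ |pth G.η t θ| ≤ C := by
  have h := G.betaSys hTm
  have hT : t_i ∈ Ioo Tm Tp := ⟨hti, hTp⟩
  have hV : BdPast Tm t_i (potV Q lam G.beta G.η G.U G.φ) := by
    refine h.bd_V hT hQ fun t ht θ => ?_
    have h1 := htcc t ht θ
    have e : 2 * (G.η t θ + lam * G.φ t θ - G.U t θ)
      = 2 * lam * G.φ t θ + 2 * (G.η t θ - G.U t θ) := by ring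
    rw [e] at h1
    rw [G.potV_eq ht]
    linarith
  have hα : BdPast Tm t_i G.α :=
    ((BdPast.exp (BetaSys.bd_beta hT hV h)).mul (BdPast.exp (BetaSys.bd_beta hT hV h))).congr
      fun t ht θ => by rw [← G.exp_beta_sq (BetaSys.mem_of_mem_Ioc hT ht), sq]
  have hti' : BdPast Tm t_i (fun t _ => t) := BdPast.time hTm
  have hαt : BdPast Tm t_i (pt G.α) := (hti'.mul (hV.mul hα)).neg.congr
    fun t ht θ => G.pt_alpha_eq (BetaSys.mem_of_mem_Ioc hT ht) θ
  have hαθ : BdPast Tm t_i (pth G.α) := (((BetaSys.bd_pth_beta hT hV h).const_mul 2).mul hα).congr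
    fun t ht θ => G.pth_alpha (BetaSys.mem_of_mem_Ioc hT ht) θ
  have hαtθ : BdPast Tm t_i (pth (pt G.α)) :=
    (hti'.mul (((hV.mul (BetaSys.bd_pth_w hT hV h)).mul hα).add (hV.mul hαθ))).neg.congr
      fun t ht θ => G.pth_pt_alpha hTm (BetaSys.mem_of_mem_Ioc hT ht) θ
  have hαtt : BdPast Tm t_i (pt (pt G.α)) :=
    (((hV.mul hα).const_mul 1).add
      (hti'.mul (((hV.mul (BetaSys.bd_pt_w hT hV h)).mul hα).add (hV.mul hαt)))).neg.congr
      fun t ht θ => G.pt_pt_alpha hTm (BetaSys.mem_of_mem_Ioc hT ht) θ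
  obtain ⟨C1, h1⟩ := hαθ
  obtain ⟨C2, h2⟩ := hαtθ
  obtain ⟨C3, h3⟩ := hαtt
  obtain ⟨C4, h4⟩ := BetaSys.bd_eta hT hV h
  obtain ⟨C5, h5⟩ := BetaSys.bd_pt_eta hT hV h
  obtain ⟨C6, h6⟩ := BetaSys.bd_pth_eta hT hV h
  refine ⟨|C1| + |C2| + |C3| + |C4| + |C5| + |C6|, fun t ht θ => ?_⟩
  have a1 := (h1 t ht θ).trans (le_abs_self _)
  have a2 := (h2 t ht θ).trans (le_abs_self _)
  have a3 := (h3 t ht θ).trans (le_abs_self _)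
  have a4 := (h4 t ht θ).trans (le_abs_self _)
  have a5 := (h5 t ht θ).trans (le_abs_self _)
  have a6 := (h6 t ht θ).trans (le_abs_self _)
  have b1 := abs_nonneg C1
  have b2 := abs_nonneg C2
  have b3 := abs_nonneg C3
  have b4 := abs_nonneg C4
  have b5 := abs_nonneg C5
  have b6 := abs_nonneg C6
  refine ⟨?_, ?_, ?_, ?_, ?_, ?_⟩ <;> linarith

end
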